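/- arXiv:2201.10501 — 6 statements merged into one kernel-verified Lean document; each statement's English description precedes it below -/
import Mathlib

section
/- Let 𝒢 be a finite connected simple graph with vertex set V and edge set E, fix a ribbon structure and a basis of 𝒢, and let N_i be the number of Jaeger trees of facet graphs of 𝒢 with exactly i tail-edges. Then the i-th coefficient of the h*-polynomial of the symmetric edge polytope P_𝒢 equals N_i; equivalently, for every integer k ≥ 0 the number of lattice points of the k-th dilate satisfies #(k·P_𝒢 ∩ ℤ^V) = ∑_{i=0}^{|V|−1} N_i · binom(k + |V| − 1 − i, |V| − 1). -/
open scoped Classical Pointwise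

namespace SEP

variable {V : Type*} [Fintype V] [DecidableEq V]

/-- The undirected simple graph underlying a set of directed edges. -/
def fromDir (D : Set (V × V)) : SimpleGraph V :=
  SimpleGraph.fromRel (fun u v => (u, v) ∈ D)

/-- A layering of a simple graph `G`: the layer difference along each edge is at most one,
and the edges with layer difference exactly one form a connected spanning subgraph. -/
structure IsLayering (G : SimpleGraph V) (l : V → ℤ) : Prop where
  step : ∀ ⦃u v⦄, G.Adj u v → |l u - l v| ≤ 1
  conn : (SimpleGraph.fromRel fun u v => G.Adj u v ∧ |l u - l v| = 1).Connected

/-- The facet graph (as a set of directed edges) associated to a layering. -/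
def facetDigraph (G : SimpleGraph V) (l : V → ℤ) : Set (V × V) :=
  {p | G.Adj p.1 p.2 ∧ l p.2 - l p.1 = 1}

/-- `D` is a facet graph of `G`. -/
def IsFacetGraph (G : SimpleGraph V) (D : Set (V × V)) : Prop :=
  ∃ l : V → ℤ, IsLayering G l ∧ D = facetDigraph G l

/-- A ribbon structure on `G`: at each vertex a cyclic permutation of the incident edges,
encoded by the "next neighbour" function `ρ`. -/
structure IsRibbon (G : SimpleGraph V) (ρ : V → V → V) : Prop where
  adj : ∀ ⦃x y⦄, G.Adj x y → G.Adj x (ρ x y)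
  cyc : ∀ ⦃x y z⦄, G.Adj x y → G.Adj x z → ∃ k : ℕ, (ρ x)^[k] y = z

/-- One step of the Bernardi tour of the tree with (undirected) edge set `T`:
from the node–edge pair (x, xy) move to (y, yx⁺) if xy is a tree edge
and to (x, xy⁺) otherwise. -/
noncomputable def tourStep (ρ : V → V → V) (T : Set (Sym2 V)) (p : V × V) : V × V :=
  if s(p.1, p.2) ∈ T then (p.2, ρ p.2 p.1) else (p.1, ρ p.1 p.2)

/-- The tour of the tree `T`, starting at the basis `(b0, b0b1)`. -/
noncomputable def tourSeq (ρ : V → V → V) (T : Set (Sym2 V)) (b0 b1 : V) (n : ℕ) : V × V :=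
  (tourStep ρ T)^[n] (b0, b1)

/-- The first time the node–edge pair (x, edge xy) becomes current in the tour of `T`. -/
noncomputable def firstVisit (ρ : V → V → V) (T : Set (Sym2 V)) (b0 b1 x y : V) : ℕ :=
  sInf {n | tourSeq ρ T b0 b1 n = (x, y)}

/-- The undirected edge set of a set of directed edges. -/
def und (T : Set (V × V)) : Set (Sym2 V) := {e | ∃ p ∈ T, e = s(p.1, p.2)}

/-- `T` is a spanning tree of the digraph `D`, recorded with its orientation. -/
def IsSpanningTreeOf (T D : Set (V × V)) : Prop :=
  T ⊆ D ∧ (fromDir T).IsTree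

/-- `T` is a Jaeger tree of the digraph `D` with respect to the ribbon structure `ρ` and the
basis `(b0, b1)`: it is a spanning tree of `D` and every directed edge t→h of `D` not in `T`
is first reached at its tail `t` in the tour of `T`. -/
def IsJaegerTree (ρ : V → V → V) (b0 b1 : V) (D T : Set (V × V)) : Prop :=
  IsSpanningTreeOf T D ∧
    ∀ p ∈ D, s(p.1, p.2) ∉ und T →
      firstVisit ρ (und T) b0 b1 p.1 p.2 < firstVisit ρ (und T) b0 b1 p.2 p.1

/-- The directed edge `p = (t, h)` of `T` is a tail-edge of `T` w.r.t. the base vertex `b0`: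
`b0` and `t` lie in the same component of `T - th`. -/
def IsTailEdge (b0 : V) (T : Set (V × V)) (p : V × V) : Prop :=
  p ∈ T ∧ (fromDir (T \ {p})).Reachable b0 p.1

/-- The set of tail-edges of `T`. -/
def tailEdges (b0 : V) (T : Set (V × V)) : Set (V × V) :=
  {p | IsTailEdge b0 T p}

/-- The number of tail-edges of `T`. -/
noncomputable def numTailEdges (b0 : V) (T : Set (V × V)) : ℕ :=
  Nat.card (tailEdges b0 T)

/-- The ordering `≺` of Jaeger trees of one facet graph: `T' ≺ T` iff their tours first
differ at a current node–edge pair `(t, th)` with the directed edge `th ∉ T'` and `th ∈ T`. -/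
def treePrec (ρ : V → V → V) (b0 b1 : V) (T' T : Set (V × V)) : Prop :=
  ∃ n : ℕ, (∀ m ≤ n, tourSeq ρ (und T') b0 b1 m = tourSeq ρ (und T) b0 b1 m) ∧
    tourSeq ρ (und T) b0 b1 n ∈ T ∧ tourSeq ρ (und T) b0 b1 n ∉ T'

/-- The standard basis vector of `ℝ^V` corresponding to a vertex. -/
noncomputable def stdVec (v : V) : V → ℝ := fun w => if w = v then 1 else 0

/-- The symmetric edge polytope of `G`. -/
noncomputable def symEdgePolytope (G : SimpleGraph V) : Set (V → ℝ) :=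
  convexHull ℝ {x | ∃ u v, G.Adj u v ∧ x = stdVec u - stdVec v}

/-- The (root polytope) simplex spanned by a set of directed edges. -/
noncomputable def simplexOf (T : Set (V × V)) : Set (V → ℝ) :=
  convexHull ℝ {x | ∃ p ∈ T, x = stdVec p.2 - stdVec p.1}

/-- A weight function with base vertex `b0`. -/
structure IsWeight (b0 : V) (f : V → ℝ) : Prop where
  base : f b0 = 1
  lb : ∀ v, v ≠ b0 → -1 ≤ f v
  ub : ∀ v, v ≠ b0 → f v ≤ 0
  total : ∑ v ∈ Finset.univ.erase b0, f v = -1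
  indep : LinearIndependent ℚ (fun v : {w : V // w ≠ b0} => f v.1)

/-- The number of lattice points of the `k`-th dilate of the symmetric edge polytope. -/
noncomputable def latticeCount (G : SimpleGraph V) (k : ℕ) : ℕ :=
  Nat.card {x : V → ℤ // (fun v => (x v : ℝ)) ∈ (k : ℝ) • symEdgePolytope G}

/-- `s` is a side of a bipartition of `G`. -/
def IsBipartition (G : SimpleGraph V) (s : Set V) : Prop :=
  ∀ ⦃u v⦄, G.Adj u v → (u ∈ s ↔ v ∉ s)

/-- A digraph (set of directed edges) is semi-balanced if every cycle of the underlying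
undirected graph has the same number of edges oriented in the two cyclic directions. -/
def IsSemiBalanced (D : Set (V × V)) : Prop :=
  ∀ ⦃v : V⦄ (w : (fromDir D).Walk v v), w.IsCycle →
    (w.darts.countP fun d => decide ((d.toProd.1, d.toProd.2) ∈ D)) =
      (w.darts.countP fun d => decide ((d.toProd.2, d.toProd.1) ∈ D))

/-- `D` is an orientation of (all the edges of) `G`. -/
def IsOrientation (G : SimpleGraph V) (D : Set (V × V)) : Prop :=
  (∀ p ∈ D, G.Adj p.1 p.2) ∧ ∀ ⦃u v⦄, G.Adj u v → ((u, v) ∈ D ↔ (v, u) ∉ D)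

/-- The state of the greedy process: the set `H` of included directed edges, the set of
node–edge pairs that have already been current, and the current node–edge pair. -/
structure GreedyState (V : Type*) where
  H : Set (V × V)
  seen : Set (V × V)
  cur : V × V

/-- One step of the (almost-)greedy process in the digraph `D`; `special` is the set of
directed edges that are exceptionally included when first reached at their tail
(`special = ∅` gives the greedy process, `special = {(u,v)}` the u→v-almost greedy one).
Hidden edges (incident pairs whose edge is absent from `D`) are skipped. -/
noncomputable def greedyStep (D special : Set (V × V)) (ρ : V → V → V)
    (s : GreedyState V) : GreedyState V :=
  let x := s.cur.1
  let y := s.cur.2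
  let seen' := s.seen ∪ {s.cur}
  if (y, x) ∈ D then
    -- the current node `x` is the head of the directed edge (y, x)
    if (y, x) ∈ s.seen then ⟨s.H, seen', (x, ρ x y)⟩
    else ⟨s.H ∪ {(y, x)}, seen', (y, ρ y x)⟩
  else if (x, y) ∈ D then
    -- the current node `x` is the tail of the directed edge (x, y)
    if s.cur ∈ special ∧ (y, x) ∉ s.seen then ⟨s.H ∪ {(x, y)}, seen', (y, ρ y x)⟩
    else if (y, x) ∈ s.seen then ⟨s.H, seen', (y, ρ y x)⟩
    else ⟨s.H, seen', (x, ρ x y)⟩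
  else ⟨s.H, seen', (x, ρ x y)⟩

/-- The sequence of states of the (almost-)greedy process started at the basis `(b0, b1)`. -/
noncomputable def greedySeq (D special : Set (V × V)) (ρ : V → V → V) (b0 b1 : V)
    (n : ℕ) : GreedyState V :=
  (greedyStep D special ρ)^[n] ⟨∅, ∅, (b0, b1)⟩

/-- The stopping time of the (almost-)greedy process: the first moment at which a node–edge
pair becomes current for the second time. -/
noncomputable def greedyStopTime (D special : Set (V × V)) (ρ : V → V → V) (b0 b1 : V) : ℕ :=
  sInf {n | (greedySeq D special ρ b0 b1 n).cur ∈ (greedySeq D special ρ b0 b1 n).seen}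

/-- The edge set produced by the (almost-)greedy process. -/
noncomputable def greedyOutput (D special : Set (V × V)) (ρ : V → V → V) (b0 b1 : V) :
    Set (V × V) :=
  (greedySeq D special ρ b0 b1 (greedyStopTime D special ρ b0 b1)).H

/-- The status of the current node–edge pair `p = (x, y)` (node `x`, edge `xy`) with respect
to a facet graph `D` and a tree `T ⊆ D`: `0` if the edge is in the tree oriented y→x,
`1` if it is hidden, `2` if it is oriented x→y in `D` but not in the tree, `3` if it is in
the tree oriented x→y (and `4` in the remaining case: oriented y→x in `D` but not in `T`). -/
noncomputable def edgeStatus (D T : Set (V × V)) (p : V × V) : ℕ :=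
  if (p.2, p.1) ∈ T then 0
  else if (p.1, p.2) ∈ T then 3
  else if (p.1, p.2) ∈ D then 2
  else if (p.2, p.1) ∈ D then 4
  else 1

/-- The quadratic order `<₄` on Jaeger trees (with their facet graphs): the tours, together
with the statuses of the current edges, agree up to step `n`, and at step `n` the status of
the current edge for the first tree is smaller than for the second one. -/
def quadLT (ρ : V → V → V) (b0 b1 : V) (q q' : Set (V × V) × Set (V × V)) : Prop :=
  ∃ n : ℕ,
    (∀ m < n, tourSeq ρ (und q.2) b0 b1 m = tourSeq ρ (und q'.2) b0 b1 m ∧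
      edgeStatus q.1 q.2 (tourSeq ρ (und q.2) b0 b1 m) =
        edgeStatus q'.1 q'.2 (tourSeq ρ (und q'.2) b0 b1 m)) ∧
    tourSeq ρ (und q.2) b0 b1 n = tourSeq ρ (und q'.2) b0 b1 n ∧
    edgeStatus q.1 q.2 (tourSeq ρ (und q.2) b0 b1 n) <
      edgeStatus q'.1 q'.2 (tourSeq ρ (und q'.2) b0 b1 n)

end SEP

namespace SEP
variable {V : Type*} [Fintype V] [DecidableEq V]
set_option linter.unusedSectionVars false

/-- Divergence of an integral flow on darts. -/
def dv (c : V × V → ℤ) (v : V) : ℤ := ∑ u, (c (u, v) - c (v, u))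

lemma dv_pair (l : V → ℤ) (c : V × V → ℤ) :
    ∑ v, l v * dv c v = ∑ p : V × V, c p * (l p.2 - l p.1) := by
  simp only [dv, Finset.mul_sum, mul_sub, Finset.sum_sub_distrib]
  rw [Fintype.sum_prod_type, Fintype.sum_prod_type]
  congr 1
  · rw [Finset.sum_comm]
    exact Finset.sum_congr rfl fun _ _ => Finset.sum_congr rfl fun _ _ => mul_comm _ _
  · exact Finset.sum_congr rfl fun _ _ => Finset.sum_congr rfl fun _ _ => mul_comm _ _

lemma dv_add (a b : V × V → ℤ) : dv (a + b) = dv a + dv b := by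
  funext v
  simp only [dv, Pi.add_apply, ← Finset.sum_add_distrib]
  exact Finset.sum_congr rfl fun _ _ => by ring

lemma dv_smul (k : ℤ) (a : V × V → ℤ) : dv (k • a) = k • dv a := by
  funext v
  simp only [dv, Pi.smul_apply, smul_eq_mul, Finset.mul_sum]
  exact Finset.sum_congr rfl fun _ _ => by ring

lemma dv_zero : dv (0 : V × V → ℤ) = 0 := by
  funext v
  simp [dv]

lemma dv_single (a b : V) :
    dv (Pi.single (a, b) 1) = (Pi.single b 1 - Pi.single a 1 : V → ℤ) := by
  funext v
  simp only [dv, Finset.sum_sub_distrib, Pi.sub_apply, Pi.single_apply, Prod.mk.injEq]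
  congr 1
  · by_cases h : v = b <;> simp [h]
  · by_cases h : v = a <;> simp [h]

/-- Oriented trees. -/
structure OTree (T : Set (V × V)) : Prop where
  tree : (fromDir T).IsTree
  anti : ∀ ⦃a b⦄, (a, b) ∈ T → (b, a) ∉ T

lemma fromDir_adj {T : Set (V × V)} {a b : V} :
    (fromDir T).Adj a b ↔ a ≠ b ∧ ((a, b) ∈ T ∨ (b, a) ∈ T) := by
  simp [fromDir]

lemma OTree.ne {T : Set (V × V)} (hT : OTree T) {a b : V} (h : (a, b) ∈ T) : a ≠ b := by
  rintro rfl
  exact hT.anti h h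

lemma OTree.adj {T : Set (V × V)} (hT : OTree T) {a b : V} (h : (a, b) ∈ T) :
    (fromDir T).Adj a b := fromDir_adj.2 ⟨hT.ne h, Or.inl h⟩

/-- The component of `T - p` containing the head of `p`. -/
def side (T : Set (V × V)) (p : V × V) : Set V := {v | (fromDir (T \ {p})).Reachable p.2 v}

lemma head_mem_side (T : Set (V × V)) (p : V × V) : p.2 ∈ side T p :=
  SimpleGraph.Reachable.refl _

lemma OTree.tail_not_mem_side {T : Set (V × V)} (hT : OTree T) {p : V × V} (hp : p ∈ T) :
    p.1 ∉ side T p := by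
  intro h
  have hadj : (fromDir T).Adj p.1 p.2 := hT.adj hp
  have hb := (SimpleGraph.isAcyclic_iff_forall_adj_isBridge.1 hT.tree.isAcyclic) hadj
  rw [SimpleGraph.isBridge_iff] at hb
  refine hb ?_
  have hle : fromDir (T \ {p}) ≤ (fromDir T).deleteEdges {s(p.1, p.2)} := by
    intro a b hab
    rw [fromDir_adj] at hab
    rw [SimpleGraph.deleteEdges_adj, fromDir_adj]
    obtain ⟨hne, h⟩ := hab
    refine ⟨⟨hne, h.imp (fun h => h.1) fun h => h.1⟩, ?_⟩
    have ha : (p.2, p.1) ∉ T := hT.anti hp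
    intro he
    simp only [Set.mem_singleton_iff, Sym2.eq_iff] at he
    rcases he with ⟨rfl, rfl⟩ | ⟨rfl, rfl⟩
    · rcases h with h | h
      · exact h.2 rfl
      · exact ha h.1
    · rcases h with h | h
      · exact ha h.1
      · exact h.2 rfl
  exact (SimpleGraph.Reachable.mono hle h).symm

lemma side_iff {T : Set (V × V)} {p r : V × V} (hr : r ∈ T) (hne : r ≠ p) :
    r.1 ∈ side T p ↔ r.2 ∈ side T p := by
  by_cases h : r.1 = r.2
  · rw [h]
  have hadj : (fromDir (T \ {p})).Adj r.1 r.2 := fromDir_adj.2 ⟨h, Or.inl ⟨hr, hne⟩⟩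
  exact ⟨fun h => h.trans hadj.reachable, fun h => h.trans hadj.symm.reachable⟩

lemma closed_of_connected {H : SimpleGraph V} (hH : H.Connected) (S : Set V) {a : V} (ha : a ∈ S)
    (hS : ∀ x y, H.Adj x y → x ∈ S → y ∈ S) (v : V) : v ∈ S := by
  obtain ⟨w⟩ := hH.preconnected a v
  induction w with
  | nil => exact ha
  | cons h w ih => exact ih (hS _ _ h ha)

lemma OTree.isTailEdge_iff {T : Set (V × V)} (hT : OTree T) {p : V × V} (hp : p ∈ T) (b0 : V) :
    IsTailEdge b0 T p ↔ b0 ∉ side T p := by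
  constructor
  · rintro ⟨_, h⟩ hs
    exact hT.tail_not_mem_side hp (SimpleGraph.Reachable.trans hs h)
  · intro h
    refine ⟨hp, ?_⟩
    have := closed_of_connected hT.tree.connected
      {v | (fromDir (T \ {p})).Reachable p.1 v ∨ (fromDir (T \ {p})).Reachable p.2 v}
      (a := p.1) (Or.inl (SimpleGraph.Reachable.refl _)) (by
        intro x y hxy hx
        by_cases hA : (fromDir (T \ {p})).Adj x y
        · exact hx.imp (fun h => h.trans hA.reachable) fun h => h.trans hA.reachable
        · rw [fromDir_adj] at hA hxy
          have h1 : (x, y) = p ∨ (y, x) = p := by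
            by_contra hc
            push Not at hc
            exact hA ⟨hxy.1, hxy.2.imp (fun h => ⟨h, hc.1⟩) fun h => ⟨h, hc.2⟩⟩
          rcases h1 with rfl | rfl
          · exact Or.inr (SimpleGraph.Reachable.refl _)
          · exact Or.inl (SimpleGraph.Reachable.refl _)) b0
    rcases this with h1 | h1
    · exact h1.symm
    · exact absurd h1 h

/-- Indicator of the head side. -/
noncomputable def chi (T : Set (V × V)) (p : V × V) (v : V) : ℤ := if v ∈ side T p then 1 else 0

lemma OTree.chi_diff {T : Set (V × V)} (hT : OTree T) {p r : V × V} (hp : p ∈ T) (hr : r ∈ T) :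
    chi T p r.2 - chi T p r.1 = if r = p then 1 else 0 := by
  by_cases h : r = p
  · subst h
    simp [chi, head_mem_side, hT.tail_not_mem_side hp]
  · simp [chi, h, side_iff hr h]

lemma OTree.cut {T : Set (V × V)} (hT : OTree T) {p : V × V} (hp : p ∈ T) {c : V × V → ℤ}
    (hc : ∀ r, r ∉ T → c r = 0) : c p = ∑ v, chi T p v * dv c v := by
  rw [dv_pair, Finset.sum_eq_single p]
  · rw [hT.chi_diff hp hp]; simp
  · intro r _ hne
    by_cases hr : r ∈ T
    · rw [hT.chi_diff hp hr]; simp [hne]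
    · simp [hc r hr]
  · simp

lemma OTree.flow_unique {T : Set (V × V)} (hT : OTree T) {c c' : V × V → ℤ}
    (hc : ∀ r, r ∉ T → c r = 0) (hc' : ∀ r, r ∉ T → c' r = 0) (h : dv c = dv c') : c = c' := by
  funext p
  by_cases hp : p ∈ T
  · rw [hT.cut hp hc, hT.cut hp hc', h]
  · rw [hc p hp, hc' p hp]

lemma walk_flow {T : Set (V × V)} {a b : V} (h : (fromDir T).Reachable a b) :
    ∃ z : V × V → ℤ, (∀ r, r ∉ T → z r = 0) ∧ dv z = Pi.single b 1 - Pi.single a 1 := by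
  obtain ⟨w⟩ := h
  induction w with
  | nil => exact ⟨0, fun _ _ => rfl, by rw [dv_zero, sub_self]⟩
  | @cons u v w hadj _ ih =>
    obtain ⟨z, hz, hd⟩ := ih
    rw [fromDir_adj] at hadj
    rcases hadj.2 with h | h
    · refine ⟨z + Pi.single (u, v) 1, ?_, ?_⟩
      · intro r hr
        have : r ≠ (u, v) := by rintro rfl; exact hr h
        simp [hz r hr, this]
      · rw [dv_add, hd, dv_single]; abel
    · refine ⟨z + (-1 : ℤ) • Pi.single (v, u) 1, ?_, ?_⟩
      · intro r hr
        have : r ≠ (v, u) := by rintro rfl; exact hr h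
        simp [hz r hr, this]
      · rw [dv_add, hd, dv_smul, dv_single, neg_one_smul]; abel

lemma exists_flow {T : Set (V × V)} (hT : (fromDir T).Connected) (x : V → ℤ) (hx : ∑ v, x v = 0) :
    ∃ z : V × V → ℤ, (∀ r, r ∉ T → z r = 0) ∧ dv z = x := by
  obtain ⟨b⟩ := hT.nonempty
  choose z hz hd using fun v => walk_flow (hT.preconnected b v)
  have key : ∀ s : Finset V, dv (∑ v ∈ s, x v • z v) = ∑ v ∈ s, x v • dv (z v) := by
    intro s
    induction s using Finset.induction_on with
    | empty => simp [dv_zero]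
    | insert a s ha ih => rw [Finset.sum_insert ha, Finset.sum_insert ha, dv_add, dv_smul, ih]
  refine ⟨∑ v, x v • z v, ?_, ?_⟩
  · intro r hr
    simp [Finset.sum_apply, hz _ r hr]
  · rw [key]
    funext w
    simp only [hd, Finset.sum_apply, Pi.smul_apply, Pi.sub_apply, smul_eq_mul, mul_sub,
      Finset.sum_sub_distrib, ← Finset.sum_mul, hx]
    simp [Pi.single_apply]

lemma sum_dv (c : V × V → ℤ) : ∑ v, dv c v = 0 := by
  have := dv_pair (fun _ => 1) c
  simpa using this

/-- The layering of a tree. -/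
noncomputable def lay (T : Set (V × V)) (v : V) : ℤ := ∑ p : V × V, if p ∈ T then chi T p v else 0

lemma OTree.lay_step {T : Set (V × V)} (hT : OTree T) {r : V × V} (hr : r ∈ T) :
    lay T r.2 - lay T r.1 = 1 := by
  rw [lay, lay, ← Finset.sum_sub_distrib, Finset.sum_eq_single r]
  · simp [hr, hT.chi_diff hr hr]
  · intro p _ hne
    by_cases hp : p ∈ T
    · simp [hp, hT.chi_diff hp hr, hne.symm]
    · simp [hp]
  · simp

end SEP

namespace SEP
variable {V : Type*} [Fintype V] [DecidableEq V]
set_option linter.unusedSectionVars false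

lemma tourSeq_succ (ρ : V → V → V) (U : Set (Sym2 V)) (b0 b1 : V) (n : ℕ) :
    tourSeq ρ U b0 b1 (n + 1) = tourStep ρ U (tourSeq ρ U b0 b1 n) := by
  simp [tourSeq, Function.iterate_succ_apply']

lemma tourSeq_shift (ρ : V → V → V) (U : Set (Sym2 V)) (b0 b1 : V) {n m : ℕ}
    (h : tourSeq ρ U b0 b1 n = tourSeq ρ U b0 b1 m) (j : ℕ) :
    tourSeq ρ U b0 b1 (n + j) = tourSeq ρ U b0 b1 (m + j) := by
  induction j with
  | zero => exact h
  | succ j ih => rw [← add_assoc, ← add_assoc, tourSeq_succ, tourSeq_succ, ih]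

/-- `Y` is a cut meeting `U` only in `s(p,q)`, with `q ∈ Y`, `p ∉ Y`. -/
structure IsCut (U : Set (Sym2 V)) (Y : Set V) (p q : V) : Prop where
  out : p ∉ Y
  inn : q ∈ Y
  iff : ∀ ⦃a b⦄, s(a, b) ∈ U → s(a, b) ≠ s(p, q) → (a ∈ Y ↔ b ∈ Y)

lemma IsCut.compl {U : Set (Sym2 V)} {Y : Set V} {p q : V} (h : IsCut U Y p q) :
    IsCut U Yᶜ q p where
  out := by simpa using h.inn
  inn := h.out
  iff := fun a b hU hne => by
    rw [Sym2.eq_swap (a := q)] at hne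
    simp [h.iff hU hne]

lemma crossing {ρ : V → V → V} {U : Set (Sym2 V)} {Y : Set V} {p q : V} (hY : IsCut U Y p q)
    (b0 b1 : V) {i j : ℕ} (hij : i ≤ j) (hi : (tourSeq ρ U b0 b1 i).1 ∉ Y)
    (hj : (tourSeq ρ U b0 b1 j).1 ∈ Y) :
    ∃ n, i ≤ n ∧ n < j ∧ tourSeq ρ U b0 b1 n = (p, q) := by
  induction j, hij using Nat.le_induction with
  | base => exact absurd hj hi
  | succ j hij ih =>
    by_cases h : (tourSeq ρ U b0 b1 j).1 ∈ Y
    · obtain ⟨n, h1, h2, h3⟩ := ih h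
      exact ⟨n, h1, by omega, h3⟩
    · refine ⟨j, hij, by omega, ?_⟩
      rw [tourSeq_succ] at hj
      generalize tourSeq ρ U b0 b1 j = d at *
      obtain ⟨a, b⟩ := d
      simp only [tourStep] at hj
      split_ifs at hj with hU
      · simp only at hj h
        by_cases hne : s(a, b) = s(p, q)
        · rw [Sym2.eq_iff] at hne
          rcases hne with ⟨rfl, rfl⟩ | ⟨rfl, rfl⟩
          · rfl
          · exact absurd hj hY.out
        · exact absurd ((hY.iff hU hne).2 hj) h
      · exact absurd hj h

lemma mem_und {T : Set (V × V)} {a b : V} : s(a, b) ∈ und T ↔ (a, b) ∈ T ∨ (b, a) ∈ T := by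
  constructor
  · rintro ⟨⟨x, y⟩, hp, he⟩
    simp only [Sym2.eq_iff] at he
    rcases he with ⟨rfl, rfl⟩ | ⟨rfl, rfl⟩
    · exact Or.inl hp
    · exact Or.inr hp
  · rintro (h | h)
    · exact ⟨_, h, rfl⟩
    · exact ⟨_, h, Sym2.eq_swap⟩

lemma OTree.isCut {T : Set (V × V)} (hT : OTree T) {p : V × V} (hp : p ∈ T) :
    IsCut (und T) (side T p) p.1 p.2 where
  out := hT.tail_not_mem_side hp
  inn := head_mem_side T p
  iff := fun a b hU hne => by
    rcases mem_und.1 hU with h | h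
    · exact side_iff h (by rintro rfl; exact hne rfl)
    · exact (side_iff h (by rintro rfl; exact hne Sym2.eq_swap)).symm

lemma OTree.exists_cut {T : Set (V × V)} (hT : OTree T) {a b : V} (h : s(a, b) ∈ und T) :
    ∃ Y, IsCut (und T) Y a b := by
  rcases mem_und.1 h with h | h
  · exact ⟨_, hT.isCut h⟩
  · exact ⟨_, (hT.isCut h).compl⟩

section
variable {G : SimpleGraph V} {ρ : V → V → V} {b0 b1 : V} {T : Set (V × V)}

lemma und_adj (hrib : IsRibbon G ρ) (hT : OTree T) (hTG : ∀ p ∈ T, G.Adj p.1 p.2)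
    {a b : V} (h : s(a, b) ∈ und T) : G.Adj a b := by
  rcases mem_und.1 h with h | h
  · exact hTG _ h
  · exact (hTG _ h).symm

lemma step_adj (hrib : IsRibbon G ρ) (hT : OTree T) (hTG : ∀ p ∈ T, G.Adj p.1 p.2)
    {d : V × V} (hd : G.Adj d.1 d.2) :
    G.Adj (tourStep ρ (und T) d).1 (tourStep ρ (und T) d).2 := by
  rw [tourStep]
  split_ifs
  · exact hrib.adj hd.symm
  · exact hrib.adj hd

lemma seq_adj (hrib : IsRibbon G ρ) (hT : OTree T) (hTG : ∀ p ∈ T, G.Adj p.1 p.2)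
    (hb : G.Adj b0 b1) (n : ℕ) :
    G.Adj (tourSeq ρ (und T) b0 b1 n).1 (tourSeq ρ (und T) b0 b1 n).2 := by
  induction n with
  | zero => exact hb
  | succ n ih => rw [tourSeq_succ]; exact step_adj hrib hT hTG ih

lemma iter_adj (hrib : IsRibbon G ρ) {x y : V} (h : G.Adj x y) (k : ℕ) : G.Adj x ((ρ x)^[k] y) := by
  induction k with
  | zero => exact h
  | succ k ih => rw [Function.iterate_succ_apply']; exact hrib.adj ih

lemma tour_recur (hrib : IsRibbon G ρ) (hT : OTree T) (hTG : ∀ p ∈ T, G.Adj p.1 p.2)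
    (hb : G.Adj b0 b1) (i : ℕ) :
    ∃ j, i < j ∧ tourSeq ρ (und T) b0 b1 j = tourSeq ρ (und T) b0 b1 i := by
  let S : {d : V × V // G.Adj d.1 d.2} → {d : V × V // G.Adj d.1 d.2} :=
    fun d => ⟨tourStep ρ (und T) d.1, step_adj hrib hT hTG d.2⟩
  have hsurj : Function.Surjective S := by
    rintro ⟨⟨x, z⟩, hxz⟩
    simp only at hxz
    obtain ⟨k, hk⟩ := hrib.cyc (hrib.adj hxz) hxz
    rw [← Function.iterate_succ_apply, Function.iterate_succ_apply'] at hk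
    have hw := iter_adj hrib hxz k
    generalize (ρ x)^[k] z = w at hk hw
    by_cases hU : s(x, w) ∈ und T
    · refine ⟨⟨(w, x), hw.symm⟩, Subtype.ext ?_⟩
      rw [Sym2.eq_swap] at hU
      simp [S, tourStep, hU, hk]
    · refine ⟨⟨(x, w), hw⟩, Subtype.ext ?_⟩
      simp [S, tourStep, hU, hk]
  have hinj := Finite.injective_iff_surjective.2 hsurj
  have hval : ∀ n d, (S^[n] d).1 = (tourStep ρ (und T))^[n] d.1 := by
    intro n
    induction n with
    | zero => intro d; rfl
    | succ n ih => intro d; rw [Function.iterate_succ_apply, ih, Function.iterate_succ_apply]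
  obtain ⟨n, hn, hper⟩ := hinj.mem_periodicPts ⟨_, seq_adj hrib hT hTG hb i⟩
  refine ⟨n + i, by omega, ?_⟩
  have := congrArg Subtype.val hper
  rw [hval] at this
  rw [tourSeq, Function.iterate_add_apply]
  exact this

lemma tour_rho (hrib : IsRibbon G ρ) (hT : OTree T) (hTG : ∀ p ∈ T, G.Adj p.1 p.2)
    (hb : G.Adj b0 b1) {x y : V}
    (h : ∃ n, tourSeq ρ (und T) b0 b1 n = (x, y)) :
    ∃ n, tourSeq ρ (und T) b0 b1 n = (x, ρ x y) := by
  obtain ⟨n, hn⟩ := h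
  by_cases hU : s(x, y) ∈ und T
  · obtain ⟨Y, hY⟩ := hT.exists_cut hU
    obtain ⟨j, hj, hjn⟩ := tour_recur hrib hT hTG hb n
    have h1 : (tourSeq ρ (und T) b0 b1 (n + 1)).1 ∉ Yᶜ := by
      rw [tourSeq_succ, hn]
      simp [tourStep, hU, hY.inn]
    have h2 : (tourSeq ρ (und T) b0 b1 j).1 ∈ Yᶜ := by
      rw [hjn, hn]
      exact hY.out
    obtain ⟨m, _, _, hm⟩ := crossing hY.compl b0 b1 hj h1 h2
    refine ⟨m + 1, ?_⟩
    rw [Sym2.eq_swap] at hU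
    rw [tourSeq_succ, hm]
    simp [tourStep, hU]
  · exact ⟨n + 1, by rw [tourSeq_succ, hn]; simp [tourStep, hU]⟩

lemma tour_all (hrib : IsRibbon G ρ) (hT : OTree T) (hTG : ∀ p ∈ T, G.Adj p.1 p.2)
    (hb : G.Adj b0 b1) {x y : V} (hxy : G.Adj x y) :
    ∃ n, tourSeq ρ (und T) b0 b1 n = (x, y) := by
  have hfull : ∀ x y z, G.Adj x y → G.Adj x z →
      (∃ n, tourSeq ρ (und T) b0 b1 n = (x, y)) → ∃ n, tourSeq ρ (und T) b0 b1 n = (x, z) := by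
    intro x y z hy hz h
    obtain ⟨k, rfl⟩ := hrib.cyc hy hz
    clear hz
    induction k with
    | zero => exact h
    | succ k ih =>
      rw [Function.iterate_succ_apply']
      exact tour_rho hrib hT hTG hb ih
  refine closed_of_connected hT.tree.connected
    {x | ∀ y, G.Adj x y → ∃ n, tourSeq ρ (und T) b0 b1 n = (x, y)} (a := b0)
    (fun y hy => hfull b0 b1 y hb hy ⟨0, rfl⟩) ?_ x y hxy
  intro a b hab ha z hz
  have hU : s(a, b) ∈ und T := mem_und.2 (fromDir_adj.1 hab).2
  have hadj : G.Adj a b := und_adj hrib hT hTG hU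
  obtain ⟨n, hn⟩ := ha b hadj
  refine hfull b (ρ b a) z (hrib.adj hadj.symm) hz ⟨n + 1, ?_⟩
  rw [tourSeq_succ, hn]
  simp [tourStep, hU]

lemma firstVisit_spec (hrib : IsRibbon G ρ) (hT : OTree T) (hTG : ∀ p ∈ T, G.Adj p.1 p.2)
    (hb : G.Adj b0 b1) {x y : V} (hxy : G.Adj x y) :
    tourSeq ρ (und T) b0 b1 (firstVisit ρ (und T) b0 b1 x y) = (x, y) :=
  Nat.sInf_mem (s := {n | tourSeq ρ (und T) b0 b1 n = (x, y)}) (tour_all hrib hT hTG hb hxy)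

lemma firstVisit_le {U : Set (Sym2 V)} {x y : V} {n : ℕ} (h : tourSeq ρ U b0 b1 n = (x, y)) :
    firstVisit ρ U b0 b1 x y ≤ n :=
  Nat.sInf_le (s := {n | tourSeq ρ U b0 b1 n = (x, y)}) h

lemma key_visit (hrib : IsRibbon G ρ) (hT : OTree T) (hTG : ∀ p ∈ T, G.Adj p.1 p.2)
    (hb : G.Adj b0 b1) {Y : Set V} {p q : V} (hY : IsCut (und T) Y p q) {n : ℕ}
    (hn : tourSeq ρ (und T) b0 b1 n = (p, q)) {a b : V} (hab : G.Adj a b)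
    (ha : a ∉ Y) (hbY : b ∈ Y) (hne : (a, b) ≠ (p, q))
    (hnv : ∀ m < n, tourSeq ρ (und T) b0 b1 m ≠ (a, b)) :
    firstVisit ρ (und T) b0 b1 b a < firstVisit ρ (und T) b0 b1 a b := by
  by_contra hlt
  push Not at hlt
  have hk := firstVisit_spec hrib hT hTG hb hab.symm
  have hk' := firstVisit_spec hrib hT hTG hb hab
  have hmin : ∀ m, tourSeq ρ (und T) b0 b1 m = (b, a) → firstVisit ρ (und T) b0 b1 b a ≤ m :=
    fun m hm => firstVisit_le hm
  generalize firstVisit ρ (und T) b0 b1 b a = k at *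
  generalize firstVisit ρ (und T) b0 b1 a b = k' at *
  have h1 : n < k' := by
    rcases lt_trichotomy n k' with h | h | h
    · exact h
    · subst h
      exact absurd (hk'.symm.trans hn) hne
    · exact absurd hk' (hnv k' h)
  obtain ⟨m, hm1, hm2, hm⟩ := crossing hY b0 b1 hlt (by rw [hk']; exact ha) (by rw [hk]; exact hbY)
  have := tourSeq_shift ρ (und T) b0 b1 (hn.trans hm.symm) (k - m)
  rw [show m + (k - m) = k by omega, hk] at this
  have := hmin _ this
  omega

end
end SEP

namespace SEP
variable {V : Type*} [Fintype V] [DecidableEq V]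
set_option linter.unusedSectionVars false

/-- `w` is a positive flow with support exactly `T`. -/
def PosOn (T : Set (V × V)) (w : V × V → ℤ) : Prop := (∀ p ∈ T, 0 < w p) ∧ ∀ p, p ∉ T → w p = 0

lemma otree_of_sub {G : SimpleGraph V} {l : V → ℤ} {T : Set (V × V)}
    (h : IsSpanningTreeOf T (facetDigraph G l)) : OTree T where
  tree := h.2
  anti := fun a b h1 h2 => by
    have h1 := (h.1 h1).2
    have h2 := (h.1 h2).2
    simp only at h1 h2
    omega

lemma adj_of_sub {G : SimpleGraph V} {l : V → ℤ} {T : Set (V × V)}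
    (h : IsSpanningTreeOf T (facetDigraph G l)) : ∀ p ∈ T, G.Adj p.1 p.2 := fun _ hp => (h.1 hp).1

lemma cost_le {G : SimpleGraph V} {l : V → ℤ} (hl : IsLayering G l) {T : Set (V × V)}
    (hTG : ∀ p ∈ T, G.Adj p.1 p.2) {w : V × V → ℤ} (hw : PosOn T w) (p : V × V) :
    w p * (l p.2 - l p.1) ≤ w p := by
  by_cases hp : p ∈ T
  · have h1 := hl.step (hTG p hp).symm
    have h2 := le_of_abs_le h1
    nlinarith [hw.1 p hp]
  · simp [hw.2 p hp]

lemma cost_eq {G : SimpleGraph V} {l : V → ℤ} {T : Set (V × V)}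
    (hT : T ⊆ facetDigraph G l) {w : V × V → ℤ} (hw : ∀ p, p ∉ T → w p = 0) :
    ∑ v, l v * dv w v = ∑ p, w p := by
  rw [dv_pair]
  refine Finset.sum_congr rfl fun p _ => ?_
  by_cases hp : p ∈ T
  · rw [(hT hp).2, mul_one]
  · simp [hw p hp]

lemma facet_unique {G : SimpleGraph V} {l l' : V → ℤ} (hl : IsLayering G l) (hl' : IsLayering G l')
    {T T' : Set (V × V)} (hT : IsSpanningTreeOf T (facetDigraph G l))
    (hT' : IsSpanningTreeOf T' (facetDigraph G l')) {w w' : V × V → ℤ} (hw : PosOn T w)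
    (hw' : PosOn T' w') (h : dv w = dv w') : facetDigraph G l = facetDigraph G l' := by
  have e1 := cost_eq hT.1 hw.2
  have e2 := cost_eq hT'.1 hw'.2
  have e3 : ∑ v, l' v * dv w v ≤ ∑ p, w p := by
    rw [dv_pair]
    exact Finset.sum_le_sum fun p _ => cost_le hl' (adj_of_sub hT) hw p
  have hle : ∀ p ∈ Finset.univ, w' p * (l p.2 - l p.1) ≤ w' p :=
    fun p _ => cost_le hl (adj_of_sub hT') hw' p
  have e4 : ∑ p, w' p * (l p.2 - l p.1) = ∑ p, w' p := by
    refine le_antisymm (Finset.sum_le_sum hle) ?_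
    rw [← dv_pair, ← h, e1, ← e2, ← h]
    exact e3
  have e5 := (Finset.sum_eq_sum_iff_of_le hle).1 e4
  have tight : ∀ p ∈ T', l p.2 - l p.1 = 1 := by
    intro p hp
    have h1 := e5 p (Finset.mem_univ _)
    have h2 := hw'.1 p hp
    have h3 : w' p * (l p.2 - l p.1 - 1) = 0 := by linarith
    rcases mul_eq_zero.1 h3 with h | h <;> omega
  obtain ⟨a⟩ := hT'.2.connected.nonempty
  have hconst := closed_of_connected hT'.2.connected {v | l v - l' v = l a - l' a} (a := a) rfl (by
    intro x y hxy hx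
    simp only [Set.mem_ofPred_eq] at hx ⊢
    rcases (fromDir_adj.1 hxy).2 with h | h
    · have h1 := tight _ h
      have h2 := (hT'.1 h).2
      simp only at h1 h2
      omega
    · have h1 := tight _ h
      have h2 := (hT'.1 h).2
      simp only at h1 h2
      omega)
  ext p
  have h1 := hconst p.1
  have h2 := hconst p.2
  simp only [facetDigraph, Set.mem_ofPred_eq] at h1 h2 ⊢
  refine and_congr_right fun _ => ?_
  omega

lemma tour_agree {ρ : V → V → V} {U U' : Set (Sym2 V)} {b0 b1 : V} {n : ℕ}
    (h : ∀ m < n, (s((tourSeq ρ U b0 b1 m).1, (tourSeq ρ U b0 b1 m).2) ∈ U ↔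
      s((tourSeq ρ U b0 b1 m).1, (tourSeq ρ U b0 b1 m).2) ∈ U')) :
    ∀ m ≤ n, tourSeq ρ U' b0 b1 m = tourSeq ρ U b0 b1 m := by
  intro m hm
  induction m with
  | zero => rfl
  | succ m ih =>
    rw [tourSeq_succ, tourSeq_succ, ih (by omega), tourStep, tourStep]
    have := h m (by omega)
    simp [this]

/-- The core of uniqueness: the first difference cannot be an edge of one tree missing from the other. -/
lemma no_first_diff {G : SimpleGraph V} {ρ : V → V → V} (hrib : IsRibbon G ρ) {b0 b1 : V}
    (hb : G.Adj b0 b1) {l : V → ℤ}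
    {T T' : Set (V × V)} (hT : IsJaegerTree ρ b0 b1 (facetDigraph G l) T)
    (hT' : IsJaegerTree ρ b0 b1 (facetDigraph G l) T') {w w' : V × V → ℤ} (hw : PosOn T w)
    (hw' : PosOn T' w') (h : dv w = dv w') {n : ℕ}
    (hagree : ∀ m < n, (s((tourSeq ρ (und T) b0 b1 m).1, (tourSeq ρ (und T) b0 b1 m).2) ∈ und T ↔
      s((tourSeq ρ (und T) b0 b1 m).1, (tourSeq ρ (und T) b0 b1 m).2) ∈ und T'))
    (h1 : s((tourSeq ρ (und T) b0 b1 n).1, (tourSeq ρ (und T) b0 b1 n).2) ∈ und T)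
    (h2 : s((tourSeq ρ (und T) b0 b1 n).1, (tourSeq ρ (und T) b0 b1 n).2) ∉ und T') : False := by
  have oT := otree_of_sub hT.1
  have oT' := otree_of_sub hT'.1
  have hTG := adj_of_sub hT.1
  have hTG' := adj_of_sub hT'.1
  have hsame := tour_agree hagree
  obtain ⟨p, q, hpq⟩ : ∃ p q, tourSeq ρ (und T) b0 b1 n = (p, q) := ⟨_, _, rfl⟩
  rw [hpq] at h1 h2
  simp only at h1 h2
  have hadj : G.Adj p q := und_adj hrib oT hTG h1
  have hpT : (p, q) ∈ T := by
    rcases mem_und.1 h1 with h | h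
    · exact h
    · exfalso
      have h3 := hT'.2 (q, p) (hT.1.1 h) (by rw [Sym2.eq_swap]; exact h2)
      simp only at h3
      have h4 : firstVisit ρ (und T') b0 b1 p q ≤ n := firstVisit_le ((hsame n le_rfl).trans hpq)
      have h5 := firstVisit_spec hrib oT' hTG' hb hadj.symm
      have h6 := hagree (firstVisit ρ (und T') b0 b1 q p) (by omega)
      rw [← hsame _ (by omega : firstVisit ρ (und T') b0 b1 q p ≤ n), h5] at h6
      simp only at h6
      rw [Sym2.eq_swap] at h6
      exact h2 (h6.1 h1)
  have hY := oT.isCut hpT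
  have hpos := hw.1 _ hpT
  rw [oT.cut hpT hw.2, h, dv_pair] at hpos
  have hneg : ∑ r, w' r * (chi T (p, q) r.2 - chi T (p, q) r.1) ≤ 0 := by
    refine Finset.sum_nonpos fun r _ => ?_
    by_cases hr : r ∈ T'
    · have hwr := hw'.1 r hr
      suffices ¬ (r.1 ∉ side T (p, q) ∧ r.2 ∈ side T (p, q)) by
        refine mul_nonpos_of_nonneg_of_nonpos hwr.le ?_
        by_cases ha : r.1 ∈ side T (p, q) <;> by_cases hb' : r.2 ∈ side T (p, q) <;>
          simp_all [chi]
      rintro ⟨ha, hbY⟩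
      obtain ⟨a, b⟩ := r
      simp only at ha hbY
      have hne : (a, b) ≠ (p, q) := by
        rintro heq
        rw [heq] at hr
        exact h2 (mem_und.2 (Or.inl hr))
      have habU' : s(a, b) ∈ und T' := mem_und.2 (Or.inl hr)
      have habD := hT'.1.1 hr
      have habU : s(a, b) ∉ und T := by
        intro hU
        refine ha ((hY.iff hU ?_).2 hbY)
        intro heq
        rw [Sym2.eq_iff] at heq
        rcases heq with ⟨rfl, rfl⟩ | ⟨rfl, rfl⟩
        · exact hne rfl
        · exact hY.out hbY
      have hkey := key_visit hrib oT hTG hb hY hpq habD.1 ha hbY hne (by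
        intro m hm hmab
        have := hagree m hm
        rw [hmab] at this
        exact habU (this.2 habU'))
      have hJ := hT.2 (a, b) habD habU
      exact lt_asymm hkey hJ
    · simp [hw'.2 r hr]
  omega

lemma jaeger_unique {G : SimpleGraph V} {ρ : V → V → V} (hrib : IsRibbon G ρ) {b0 b1 : V}
    (hb : G.Adj b0 b1) {D D' T T' : Set (V × V)} (hD : IsFacetGraph G D) (hD' : IsFacetGraph G D')
    (hT : IsJaegerTree ρ b0 b1 D T) (hT' : IsJaegerTree ρ b0 b1 D' T')
    {w w' : V × V → ℤ} (hw : PosOn T w) (hw' : PosOn T' w') (h : dv w = dv w') :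
    D = D' ∧ T = T' := by
  obtain ⟨l, hl, rfl⟩ := hD
  obtain ⟨l', hl', rfl⟩ := hD'
  have hDD := facet_unique hl hl' hT.1 hT'.1 hw hw' h
  refine ⟨hDD, ?_⟩
  rw [← hDD] at hT'
  have oT := otree_of_sub hT.1
  have hTG := adj_of_sub hT.1
  have oT' := otree_of_sub hT'.1
  have hTG' := adj_of_sub hT'.1
  let P : ℕ → Prop := fun m =>
    (s((tourSeq ρ (und T) b0 b1 m).1, (tourSeq ρ (und T) b0 b1 m).2) ∈ und T ↔
      s((tourSeq ρ (und T) b0 b1 m).1, (tourSeq ρ (und T) b0 b1 m).2) ∈ und T')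
  have hall : ∀ m, P m := by
    by_contra hc
    push Not at hc
    have hmin : ∀ m < Nat.find hc, P m := fun m hm => not_not.1 (Nat.find_min hc hm)
    have hn := Nat.find_spec hc
    generalize Nat.find hc = n at hmin hn
    by_cases h1 : s((tourSeq ρ (und T) b0 b1 n).1, (tourSeq ρ (und T) b0 b1 n).2) ∈ und T
    · by_cases h2 : s((tourSeq ρ (und T) b0 b1 n).1, (tourSeq ρ (und T) b0 b1 n).2) ∈ und T'
      · exact hn ⟨fun _ => h2, fun _ => h1⟩
      · exact no_first_diff hrib hb hT hT' hw hw' h hmin h1 h2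
    · have h2 : s((tourSeq ρ (und T) b0 b1 n).1, (tourSeq ρ (und T) b0 b1 n).2) ∈ und T' := by
        by_contra h2
        exact hn ⟨fun h => absurd h h1, fun h => absurd h h2⟩
      have hsame := tour_agree hmin
      refine no_first_diff (n := n) hrib hb hT' hT hw' hw h.symm ?_ ?_ ?_
      · intro m hm
        rw [hsame m hm.le]
        exact (hmin m hm).symm
      · rw [hsame n le_rfl]; exact h2
      · rw [hsame n le_rfl]; exact h1
  have hU : ∀ a b, G.Adj a b → (s(a, b) ∈ und T ↔ s(a, b) ∈ und T') := by
    intro a b hab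
    obtain ⟨n, hn⟩ := tour_all hrib oT hTG hb hab
    have := hall n
    simp only [P, hn] at this
    exact this
  ext ⟨a, b⟩
  constructor
  · intro hab
    rcases mem_und.1 ((hU a b (hTG _ hab)).1 (mem_und.2 (Or.inl hab))) with h | h
    · exact h
    · have h1 := (hT.1.1 hab).2
      have h2 := (hT'.1.1 h).2
      simp only at h1 h2
      omega
  · intro hab
    rcases mem_und.1 ((hU a b (hTG' _ hab)).2 (mem_und.2 (Or.inl hab))) with h | h
    · exact h
    · have h1 := (hT'.1.1 hab).2
      have h2 := (hT.1.1 h).2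
      simp only at h1 h2
      omega

end SEP

namespace SEP
variable {V : Type*} [Fintype V] [DecidableEq V]
set_option linter.unusedSectionVars false

/-- generic demand vectors -/
def Gen (y : V → ℤ) : Prop :=
  ∀ Y : Set V, Y.Nonempty → Y ≠ Set.univ → ∑ v, (if v ∈ Y then 1 else 0) * y v ≠ 0

/-- support of a nonnegative flow -/
def supp (c : V × V → ℤ) : Set (V × V) := {p | 0 < c p}

structure Feas (G : SimpleGraph V) (y : V → ℤ) (c : V × V → ℤ) : Prop where
  nonneg : ∀ p, 0 ≤ c p
  adj : ∀ p, 0 < c p → G.Adj p.1 p.2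
  div : dv c = y
  card : (supp c).ncard + 1 ≤ Nat.card V

lemma Feas.posOn {G : SimpleGraph V} {y : V → ℤ} {c : V × V → ℤ} (h : Feas G y c) :
    PosOn (supp c) c :=
  ⟨fun _ hp => hp, fun p hp => le_antisymm (not_lt.1 hp) (h.nonneg p)⟩

lemma card_edge_le {T S : Set (V × V)} (h : ∀ a b, (a, b) ∈ T → (a, b) ∈ S ∨ (b, a) ∈ S) :
    Nat.card (fromDir T).edgeSet ≤ S.ncard := by
  have hsub : (fromDir T).edgeSet ⊆ (fun p : V × V => s(p.1, p.2)) '' S := by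
    intro e
    induction e with
    | h a b =>
      intro he
      rw [SimpleGraph.mem_edgeSet, fromDir_adj] at he
      have : (a, b) ∈ S ∨ (b, a) ∈ S := by
        rcases he.2 with h1 | h1
        · exact h _ _ h1
        · exact (h _ _ h1).symm
      rcases this with h1 | h1
      · exact ⟨_, h1, rfl⟩
      · exact ⟨_, h1, Sym2.eq_swap⟩
  calc Nat.card (fromDir T).edgeSet = (fromDir T).edgeSet.ncard := rfl
    _ ≤ _ := Set.ncard_le_ncard hsub (Set.toFinite _)
    _ ≤ _ := Set.ncard_image_le (Set.toFinite _)

lemma feas_connected [Nonempty V] {G : SimpleGraph V} {y : V → ℤ} (hy : Gen y) {c : V × V → ℤ}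
    (h : Feas G y c) : (fromDir (supp c)).Connected := by
  refine SimpleGraph.Connected.mk ?_
  intro u w
  by_contra hr
  refine hy {v | (fromDir (supp c)).Reachable u v} ⟨u, SimpleGraph.Reachable.refl _⟩ ?_ ?_
  · intro he
    have : w ∈ (Set.univ : Set V) := Set.mem_univ _
    rw [← he] at this
    exact hr this
  · rw [← h.div, dv_pair]
    refine Finset.sum_eq_zero fun p _ => ?_
    by_cases hp : p ∈ supp c
    · have hadj : (fromDir (supp c)).Adj p.1 p.2 := fromDir_adj.2 ⟨(h.adj p hp).ne, Or.inl hp⟩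
      have : (fromDir (supp c)).Reachable u p.1 ↔ (fromDir (supp c)).Reachable u p.2 :=
        ⟨fun h => h.trans hadj.reachable, fun h => h.trans hadj.symm.reachable⟩
      simp only [Set.mem_ofPred_eq, this]
      refine mul_eq_zero_of_right _ ?_
      by_cases hq : (fromDir (supp c)).Reachable u p.2
      · rw [if_pos hq, if_pos hq, sub_self]
      · rw [if_neg hq, if_neg hq, sub_self]
    · simp [h.posOn.2 p hp]

lemma feas_tree [Nonempty V] {G : SimpleGraph V} {y : V → ℤ} (hy : Gen y) {c : V × V → ℤ}
    (h : Feas G y c) : OTree (supp c) ∧ (supp c).ncard + 1 = Nat.card V := by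
  have hconn := feas_connected hy h
  have h1 := hconn.card_vert_le_card_edgeSet_add_one
  have h2 : Nat.card (fromDir (supp c)).edgeSet ≤ (supp c).ncard :=
    card_edge_le fun a b h => Or.inl h
  have h3 := h.card
  refine ⟨⟨SimpleGraph.isTree_iff_connected_and_card.2 ⟨hconn, by omega⟩, ?_⟩, by omega⟩
  intro a b hab hba
  have hne : a ≠ b := (h.adj _ hab).ne
  have h4 : Nat.card (fromDir (supp c)).edgeSet ≤ (supp c \ {(b, a)}).ncard := by
    refine card_edge_le fun x z hxz => ?_
    by_cases he : (x, z) = (b, a)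
    · right
      obtain ⟨rfl, rfl⟩ := Prod.mk.inj he
      exact ⟨hab, by simp [hne]⟩
    · exact Or.inl ⟨hxz, he⟩
  have h5 := Set.ncard_sdiff_singleton_lt_of_mem hba (Set.toFinite _)
  omega

lemma feas_exists {G : SimpleGraph V} (hG : G.Connected) (y : V → ℤ) (hy : ∑ v, y v = 0) :
    ∃ c, Feas G y c := by
  obtain ⟨H, hle, hH⟩ := hG.exists_isTree_le
  have hdir : fromDir {p : V × V | H.Adj p.1 p.2} = H := by
    ext a b
    rw [fromDir_adj]
    constructor
    · rintro ⟨_, h | h⟩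
      · exact h
      · exact h.symm
    · intro h
      exact ⟨h.ne, Or.inl h⟩
  obtain ⟨z, hz, hd⟩ := exists_flow (T := {p : V × V | H.Adj p.1 p.2}) (by
    rw [hdir]; exact hH.connected) y hy
  have hadj : ∀ p : V × V, 0 < max 0 (z p - z p.swap) → H.Adj p.1 p.2 := by
    intro p hp
    by_contra hn
    have h1 := hz p hn
    have h2 := hz p.swap fun h => hn (SimpleGraph.Adj.symm h)
    simp [h1, h2] at hp
  refine ⟨fun p => max 0 (z p - z p.swap), fun p => le_max_left _ _, fun p hp => hle (hadj p hp),
    ?_, ?_⟩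
  · rw [← hd]
    funext v
    refine Finset.sum_congr rfl fun u _ => ?_
    simp only [Prod.swap_prod_mk]
    omega
  · have hcard := (SimpleGraph.isTree_iff_connected_and_card.1 hH).2
    have : (supp fun p => max 0 (z p - z p.swap)).ncard ≤ H.edgeSet.ncard := by
      refine Set.ncard_le_ncard_of_injOn (fun p : V × V => s(p.1, p.2)) (fun p hp => hadj p hp) ?_
        (Set.toFinite _)
      rintro ⟨a, b⟩ hp ⟨a', b'⟩ hp' heq
      simp only [Sym2.eq_iff] at heq
      rcases heq with ⟨rfl, rfl⟩ | ⟨rfl, rfl⟩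
      · rfl
      · exfalso
        simp only [supp, Set.mem_ofPred_eq, Prod.swap_prod_mk] at hp hp'
        omega
    have h2 : Nat.card H.edgeSet = H.edgeSet.ncard := rfl
    omega

lemma sum_single_mul (f : V → ℤ) (a b : V) :
    ∑ v, f v * (Pi.single b 1 - Pi.single a 1 : V → ℤ) v = f b - f a := by
  simp [mul_sub, Finset.sum_sub_distrib, Pi.single_apply]

lemma pivot [Nonempty V] {G : SimpleGraph V} {y : V → ℤ} (hy : Gen y) {c : V × V → ℤ}
    (h : Feas G y c) {u v : V} (huv : G.Adj u v) (hT : (u, v) ∉ supp c)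
    (hl : 1 ≤ lay (supp c) v - lay (supp c) u) :
    ∃ c' g, Feas G y c' ∧ g ∈ supp c ∧ supp c' = insert (u, v) (supp c \ {g}) ∧
      v ∈ side (supp c) g ∧ u ∉ side (supp c) g ∧
      ∃ θ : ℤ, 0 < θ ∧ ∑ p, c' p = ∑ p, c p + θ * (1 - (lay (supp c) v - lay (supp c) u)) := by
  obtain ⟨oT, hcard⟩ := feas_tree hy h
  obtain ⟨z, hz, hd⟩ := walk_flow (oT.tree.connected.preconnected v u)
  have hzc : ∀ p ∈ supp c, z p = chi (supp c) p u - chi (supp c) p v := by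
    intro p hp
    rw [oT.cut hp hz, hd, sum_single_mul]
  have hsum : ∑ p, z p = lay (supp c) u - lay (supp c) v := by
    rw [← sum_single_mul, ← hd, dv_pair]
    refine Finset.sum_congr rfl fun p _ => ?_
    by_cases hp : p ∈ supp c
    · rw [oT.lay_step hp, mul_one]
    · simp [hz p hp]
  have hne : (Finset.univ.filter fun p => z p < 0).Nonempty := by
    by_contra hc
    rw [Finset.not_nonempty_iff_eq_empty, Finset.filter_eq_empty_iff] at hc
    have : 0 ≤ ∑ p, z p := Finset.sum_nonneg fun p hp => not_lt.1 (hc hp)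
    omega
  obtain ⟨g, hg, hmin⟩ := Finset.exists_min_image _ c hne
  simp only [Finset.mem_filter, Finset.mem_univ, true_and] at hg hmin
  have hgT : g ∈ supp c := by
    by_contra hc
    rw [hz g hc] at hg
    exact lt_irrefl _ hg
  have hgne : g ≠ (u, v) := by rintro rfl; exact hT hgT
  have hcg : 0 < c g := hgT
  have hside : v ∈ side (supp c) g ∧ u ∉ side (supp c) g := by
    have := hzc g hgT
    rw [this] at hg
    by_cases h1 : v ∈ side (supp c) g <;> by_cases h2 : u ∈ side (supp c) g <;>
      simp_all [chi]
  set c' : V × V → ℤ := c + c g • (z + Pi.single (u, v) 1) with hc'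
  have hc'v : ∀ p, c' p = c p + c g * (z p + if p = (u, v) then 1 else 0) := by
    intro p
    simp only [hc', Pi.add_apply, Pi.smul_apply, Pi.single_apply, smul_eq_mul]
  have hnonneg : ∀ p, 0 ≤ c' p := by
    intro p
    rw [hc'v]
    have h0 := h.nonneg p
    have h1 : 0 ≤ c g * (if p = (u, v) then 1 else 0) := by
      split_ifs <;> simp [hcg.le]
    have h2 : 0 ≤ c p + c g * z p := by
      by_cases hp : z p < 0
      · have h3 := hmin p hp
        have hpT : p ∈ supp c := by
          by_contra hc
          rw [hz p hc] at hp
          exact lt_irrefl _ hp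
        have h4 : -1 ≤ z p := by
          rw [hzc p hpT, chi, chi]
          split_ifs <;> norm_num
        nlinarith
      · push Not at hp
        positivity
    linarith
  have hc'g : c' g = 0 := by
    rw [hc'v]
    have : z g = -1 := by
      rw [hzc g hgT]
      simp [chi, hside]
    simp [this, hgne]
  have hsub : supp c' ⊆ insert (u, v) (supp c \ {g}) := by
    intro p hp
    by_cases hpe : p = (u, v)
    · exact Or.inl hpe
    · right
      have hpg : p ≠ g := by
        rintro rfl
        simp [supp, hc'g] at hp
      refine ⟨?_, hpg⟩
      by_contra hpT
      have : c' p = 0 := by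
        rw [hc'v, hz p hpT, h.posOn.2 p hpT]
        simp [hpe]
      simp [supp, this] at hp
  have hcard2 : (insert (u, v) (supp c \ {g})).ncard = (supp c).ncard := by
    rw [Set.ncard_insert_of_notMem (fun hh => hT hh.1) (Set.toFinite _),
      Set.ncard_sdiff_singleton_add_one hgT (Set.toFinite _)]
  have hF : Feas G y c' := by
    refine ⟨hnonneg, ?_, ?_, ?_⟩
    · intro p hp
      rcases hsub hp with rfl | hh
      · exact huv
      · exact h.adj p hh.1
    · rw [hc', dv_add, dv_smul, dv_add, hd, dv_single, h.div]
      simp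
    · have := Set.ncard_le_ncard hsub (Set.toFinite _)
      omega
  refine ⟨c', g, hF, hgT, ?_, hside.1, hside.2, c g, hcg, ?_⟩
  · refine Set.eq_of_subset_of_ncard_le hsub ?_ (Set.toFinite _)
    have := (feas_tree hy hF).2
    omega
  · simp only [hc'v, Finset.sum_add_distrib, ← Finset.mul_sum, hsum]
    simp
    left
    ring

/-- status of a node-edge pair -/
noncomputable def st (T : Set (V × V)) (d : V × V) : ℕ :=
  if (d.2, d.1) ∈ T then 0 else if d ∈ T then 2 else 1

lemma jaeger_exists {G : SimpleGraph V} (hG : G.Connected) {ρ : V → V → V} (hrib : IsRibbon G ρ)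
    {b0 b1 : V} (hb : G.Adj b0 b1) (y : V → ℤ) (hy0 : ∑ v, y v = 0) (hy : Gen y) :
    ∃ D T c, IsFacetGraph G D ∧ IsJaegerTree ρ b0 b1 D T ∧ PosOn T c ∧ dv c = y := by
  have : Nonempty V := ⟨b0⟩
  have hex : ∃ n : ℕ, ∃ c, Feas G y c ∧ ∑ p, c p = n := by
    obtain ⟨c, hc⟩ := feas_exists hG y hy0
    have h0 : 0 ≤ ∑ p, c p := Finset.sum_nonneg fun p _ => hc.nonneg p
    exact ⟨(∑ p, c p).toNat, c, hc, by omega⟩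
  have hKmin : ∀ c, Feas G y c → (Nat.find hex : ℤ) ≤ ∑ p, c p := by
    intro c hc
    have h0 : 0 ≤ ∑ p, c p := Finset.sum_nonneg fun p _ => hc.nonneg p
    have := Nat.find_min' hex (m := (∑ p, c p).toNat) ⟨c, hc, by omega⟩
    omega
  have hK := Nat.find_spec hex
  generalize Nat.find hex = K at hKmin hK
  obtain ⟨T, ⟨c, hc, hcK, rfl⟩, hmin⟩ := Set.exists_min_image
    {T : Set (V × V) | ∃ c, Feas G y c ∧ ∑ p, c p = K ∧ supp c = T}
    (fun T => toLex (fun n => st T (tourSeq ρ (und T) b0 b1 n) : ℕ → ℕ))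
    (Set.toFinite _) (by
      obtain ⟨c, hc, h⟩ := hK
      exact ⟨_, c, hc, h, rfl⟩)
  obtain ⟨oT, -⟩ := feas_tree hy hc
  have hTG : ∀ p ∈ supp c, G.Adj p.1 p.2 := hc.adj
  have hstep : ∀ u v, G.Adj u v → lay (supp c) v - lay (supp c) u ≤ 1 := by
    intro u v huv
    by_contra hgt
    push Not at hgt
    have hnT : (u, v) ∉ supp c := by
      intro hm
      have := oT.lay_step hm
      simp only at this
      omega
    obtain ⟨c', g, hF, -, -, -, -, θ, hθ, hcost⟩ := pivot hy hc huv hnT (by omega)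
    have := hKmin c' hF
    nlinarith
  have hlay : IsLayering G (lay (supp c)) := by
    constructor
    · intro u v huv
      have h1 := hstep u v huv
      have h2 := hstep v u huv.symm
      rw [abs_le]
      constructor <;> omega
    · refine SimpleGraph.Connected.mono ?_ oT.tree.connected
      intro a b hab
      rw [fromDir_adj] at hab
      rw [SimpleGraph.fromRel_adj]
      refine ⟨hab.1, ?_⟩
      rcases hab.2 with h | h
      · right
        have := oT.lay_step h
        simp only at this
        exact ⟨(hTG _ h).symm, by rw [this]; rfl⟩
      · left
        have := oT.lay_step h
        simp only at this
        exact ⟨(hTG _ h).symm, by rw [this]; rfl⟩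
  refine ⟨facetDigraph G (lay (supp c)), supp c, c, ⟨_, hlay, rfl⟩,
    ⟨⟨fun p hp => ⟨hTG p hp, oT.lay_step hp⟩, oT.tree⟩, ?_⟩, hc.posOn, hc.div⟩
  rintro ⟨u, v⟩ ⟨huv, hl⟩ hnU
  simp only at huv hl hnU ⊢
  by_contra hlt
  push Not at hlt
  have hnT : (u, v) ∉ supp c := fun h => hnU (mem_und.2 (Or.inl h))
  have hnT' : (v, u) ∉ supp c := fun h => hnU (mem_und.2 (Or.inr h))
  obtain ⟨c', g, hF, hgT, hsupp, hvs, hus, θ, hθ, hcost⟩ := pivot hy hc huv hnT (by omega)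
  obtain ⟨t, h⟩ := g
  have hgT' : (h, t) ∉ supp c := oT.anti hgT
  have hle := hmin (supp c') ⟨c', hF, by rw [hcost, hl, hcK]; ring, rfl⟩
  refine absurd hle (not_le_of_gt ?_)
  -- first time one of the exchanged edges is reached
  have hexn : ∃ n, tourSeq ρ (und (supp c)) b0 b1 n ∈
      ({(v, u), (u, v), (t, h), (h, t)} : Set (V × V)) := by
    obtain ⟨n, hn⟩ := tour_all hrib oT hTG hb huv.symm
    exact ⟨n, by rw [hn]; simp⟩
  have hn := Nat.find_spec hexn
  have hnmin : ∀ m < Nat.find hexn, tourSeq ρ (und (supp c)) b0 b1 m ∉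
      ({(v, u), (u, v), (t, h), (h, t)} : Set (V × V)) := fun m hm => Nat.find_min hexn hm
  generalize Nat.find hexn = n at hn hnmin
  have hmem : ∀ d : V × V, d ∉ ({(v, u), (u, v), (t, h), (h, t)} : Set (V × V)) →
      (d ∈ supp c' ↔ d ∈ supp c) ∧ ((d.2, d.1) ∈ supp c' ↔ (d.2, d.1) ∈ supp c) := by
    rintro ⟨a, b⟩ hd
    simp only [Set.mem_insert_iff, Set.mem_singleton_iff, Prod.mk.injEq] at hd
    rw [hsupp]
    simp only [Set.mem_insert_iff, Set.mem_sdiff, Set.mem_singleton_iff, Prod.mk.injEq]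
    tauto
  have hsame := tour_agree (ρ := ρ) (b0 := b0) (b1 := b1) (n := n) (U := und (supp c))
    (U' := und (supp c')) (by
      intro m hm
      have := hmem _ (hnmin m hm)
      rw [mem_und, mem_und]
      exact (or_congr this.1 this.2).symm)
  refine ⟨n, ?_, ?_⟩
  · intro m hm
    change st (supp c') (tourSeq ρ (und (supp c')) b0 b1 m) =
      st (supp c) (tourSeq ρ (und (supp c)) b0 b1 m)
    rw [hsame m (le_of_lt hm)]
    have := hmem _ (hnmin m hm)
    simp only [st, this.1, this.2]
  · change st (supp c') (tourSeq ρ (und (supp c')) b0 b1 n) <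
      st (supp c) (tourSeq ρ (und (supp c)) b0 b1 n)
    rw [hsame n le_rfl]
    simp only [Set.mem_insert_iff, Set.mem_singleton_iff] at hn
    rcases hn with hn | hn | hn | hn
    · rw [hn]
      have h1 : (u, v) ∈ supp c' := by rw [hsupp]; exact Or.inl rfl
      simp [st, h1, hnT, hnT']
    · exfalso
      have h1 := firstVisit_le hn
      have h2 := firstVisit_spec hrib oT hTG hb huv.symm
      rcases lt_or_eq_of_le (hlt.trans h1) with h3 | h3
      · exact hnmin _ h3 (by rw [h2]; simp)
      · rw [h3, hn] at h2
        exact huv.ne (Prod.mk.inj h2).1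
    · rw [hn]
      have h1 : (t, h) ∉ supp c' := by
        rw [hsupp]
        rintro (h1 | h1)
        · rw [h1] at hgT; exact hnT hgT
        · exact h1.2 rfl
      have h2 : (h, t) ∉ supp c' := by
        rw [hsupp]
        rintro (h1 | h1)
        · obtain ⟨rfl, rfl⟩ := Prod.mk.inj h1
          exact hnT' hgT
        · exact hgT' h1.1
      simp [st, h1, h2, hgT, hgT']
    · exfalso
      have := key_visit hrib oT hTG hb (oT.isCut hgT).compl hn huv.symm (by simpa using hvs) hus
        (by
          intro h1
          obtain ⟨rfl, rfl⟩ := Prod.mk.inj h1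
          exact hnT hgT)
        (by
          intro m hm h1
          exact hnmin m hm (by rw [h1]; simp))
      omega

end SEP

namespace SEP
variable {V : Type*} [Fintype V] [DecidableEq V]
set_option linter.unusedSectionVars false

/-! ### Counting functions -/

lemma card_piAnti {ι : Type*} [DecidableEq ι] (s : Finset ι) (m : ℕ) :
    (s.piAntidiag m).card = s.card.multichoose m := by
  rw [← Finset.card_finsuppAntidiag_nat_eq_multichoose]
  symm
  refine Finset.card_bij (fun (f : ι →₀ ℕ) _ => (f : ι → ℕ)) ?_ ?_ ?_
  · intro f hf
    rw [Finset.mem_finsuppAntidiag] at hf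
    rw [Finset.mem_piAntidiag]
    exact ⟨hf.1, fun i hi => hf.2 (Finsupp.mem_support_iff.2 hi)⟩
  · intro f _ g _ h
    exact DFunLike.coe_injective h
  · intro f hf
    rw [Finset.mem_piAntidiag] at hf
    refine ⟨Finsupp.onFinset s f hf.2, ?_, rfl⟩
    rw [Finset.mem_finsuppAntidiag]
    exact ⟨hf.1, Finsupp.support_onFinset_subset⟩

noncomputable def cnt {ι : Type*} [DecidableEq ι] (s : Finset ι) (m : ℕ) : Finset (ι → ℕ) :=
  (Finset.range (m + 1)).biUnion fun j => s.piAntidiag j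

lemma mem_cnt {ι : Type*} [DecidableEq ι] {s : Finset ι} {m : ℕ} {f : ι → ℕ} :
    f ∈ cnt s m ↔ ∑ i ∈ s, f i ≤ m ∧ ∀ i, i ∉ s → f i = 0 := by
  simp only [cnt, Finset.mem_biUnion, Finset.mem_range, Finset.mem_piAntidiag]
  constructor
  · rintro ⟨j, hj, h1, h2⟩
    exact ⟨(le_of_eq h1).trans (by omega), fun i hi => by by_contra h; exact hi (h2 i h)⟩
  · rintro ⟨h1, h2⟩
    exact ⟨_, Nat.lt_succ_of_le h1, rfl, fun i hi => by by_contra h; exact hi (h2 i h)⟩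

lemma card_cnt {ι : Type*} [DecidableEq ι] (s : Finset ι) (m : ℕ) :
    (cnt s m).card = (m + s.card).choose s.card := by
  rw [cnt, Finset.card_biUnion, ← Nat.sum_range_multichoose]
  · exact Finset.sum_congr rfl fun j _ => card_piAnti s j
  · intro a _ b _ hab
    rw [Function.onFun, Finset.disjoint_left]
    intro f hf hf'
    rw [Finset.mem_piAntidiag] at hf hf'
    exact hab (hf.1.symm.trans hf'.1)

def Good (T A : Set (V × V)) (k : ℕ) (c : V × V → ℤ) : Prop :=
  (∀ r, r ∉ T → c r = 0) ∧ (∀ r, 0 ≤ c r) ∧ (∀ r ∈ A, 1 ≤ c r) ∧ ∑ r, c r ≤ k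

lemma card_good {T A : Set (V × V)} (hA : A ⊆ T) (k : ℕ) {d : ℕ} (hd : T.ncard = d) :
    Nat.card {c // Good T A k c} = (k + d - A.ncard).choose d := by
  have hAle : A.ncard ≤ d := hd ▸ Set.ncard_le_ncard hA (Set.toFinite _)
  have hind : ∑ r, (if r ∈ A then (1 : ℤ) else 0) = A.ncard := by
    rw [Finset.sum_boole, Set.ncard_eq_toFinset_card']
    congr 2
    ext; simp
  by_cases hk : A.ncard ≤ k
  · have hT : T.toFinset.card = d := by rw [← hd, Set.ncard_eq_toFinset_card']
    have h1 : (k + d - A.ncard).choose d = (cnt T.toFinset (k - A.ncard)).card := by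
      rw [card_cnt, hT]; congr 1; omega
    rw [h1, ← Nat.card_eq_finsetCard]
    symm
    have hsum : ∀ f ∈ cnt T.toFinset (k - A.ncard), ∑ r, f r ≤ k - A.ncard := by
      intro f hf
      rw [mem_cnt] at hf
      rw [← Finset.sum_subset (Finset.subset_univ T.toFinset) (fun r _ hr => hf.2 r hr)]
      exact hf.1
    refine Nat.card_eq_of_bijective
      (fun f => ⟨fun r => (f.1 r : ℤ) + if r ∈ A then 1 else 0, ?_, ?_, ?_, ?_⟩) ⟨?_, ?_⟩
    · intro r hr
      have h2 : r ∉ A := fun h => hr (hA h)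
      have h3 := (mem_cnt.1 f.2).2 r (by simpa using hr)
      simp [h2, h3]
    · intro r
      positivity
    · intro r hr
      simp [hr]
    · have := hsum f.1 f.2
      rw [Finset.sum_add_distrib, hind]
      have h4 : ((∑ r, f.1 r : ℕ) : ℤ) ≤ ((k - A.ncard : ℕ) : ℤ) := by exact_mod_cast this
      push_cast [hk] at h4
      linarith
    · rintro ⟨f, hf⟩ ⟨g, hg⟩ h
      refine Subtype.ext ?_
      funext r
      have := congrFun (congrArg Subtype.val h) r
      simpa using this
    · rintro ⟨c, hc1, hc2, hc3, hc4⟩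
      have hge : ∀ r, 0 ≤ c r - if r ∈ A then 1 else 0 := by
        intro r
        split_ifs with h
        · have := hc3 r h; omega
        · have := hc2 r; omega
      refine ⟨⟨fun r => (c r - if r ∈ A then 1 else 0).toNat, ?_⟩, ?_⟩
      · rw [mem_cnt]
        constructor
        · refine (Finset.sum_le_univ_sum_of_nonneg (fun _ => Nat.zero_le _)).trans ?_
          zify [hk]
          rw [Finset.sum_congr rfl (fun r _ => Int.toNat_of_nonneg (hge r)),
            Finset.sum_sub_distrib, hind]
          linarith
        · intro r hr
          have hr' : r ∉ T := by simpa using hr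
          have h2 : r ∉ A := fun h => hr' (hA h)
          simp [h2, hc1 r hr']
      · refine Subtype.ext ?_
        funext r
        simp only [Int.toNat_of_nonneg (hge r)]
        ring
  · rw [Nat.choose_eq_zero_of_lt (by omega)]
    have : IsEmpty {c // Good T A k c} := by
      refine ⟨?_⟩
      rintro ⟨c, hc1, hc2, hc3, hc4⟩
      have : ∑ r, (if r ∈ A then (1 : ℤ) else 0) ≤ ∑ r, c r := by
        refine Finset.sum_le_sum fun r _ => ?_
        split_ifs with h
        · exact hc3 r h
        · exact hc2 r
      rw [hind] at this
      omega
    exact Nat.card_of_isEmpty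

lemma OTree.ncard {T : Set (V × V)} (hT : OTree T) : T.ncard = Fintype.card V - 1 := by
  have h1 := (SimpleGraph.isTree_iff_connected_and_card.1 hT.tree).2
  have h2 : Nat.card (fromDir T).edgeSet = T.ncard := by
    rw [Nat.card_coe_set_eq]
    symm
    refine Set.ncard_congr (fun p _ => s(p.1, p.2)) ?_ ?_ ?_
    · rintro ⟨a, b⟩ hp
      exact hT.adj hp
    · rintro ⟨a, b⟩ ⟨a', b'⟩ h h' he
      simp only [Sym2.eq_iff] at he
      rcases he with ⟨rfl, rfl⟩ | ⟨rfl, rfl⟩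
      · rfl
      · exact absurd h' (hT.anti h)
    · intro e he
      induction e with
      | h a b =>
        rw [SimpleGraph.mem_edgeSet, fromDir_adj] at he
        rcases he.2 with h | h
        · exact ⟨(a, b), h, rfl⟩
        · exact ⟨(b, a), h, Sym2.eq_swap⟩
  rw [Nat.card_eq_fintype_card] at h1
  rw [Nat.card_eq_fintype_card] at h2
  rw [Nat.card_eq_fintype_card] at h1
  omega

/-! ### The shift vector -/

def shiftVec (b0 : V) (v : V) : ℤ := if v = b0 then (Fintype.card V : ℤ) - 1 else -1

lemma sum_shift_set (b0 : V) (Y : Set V) :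
    ∑ v, (if v ∈ Y then (1 : ℤ) else 0) * shiftVec b0 v =
      (if b0 ∈ Y then (Fintype.card V : ℤ) else 0) - Y.ncard := by
  have h : ∀ v, (if v ∈ Y then (1 : ℤ) else 0) * shiftVec b0 v =
      (if v = b0 then (if b0 ∈ Y then (Fintype.card V : ℤ) else 0) else 0) -
        if v ∈ Y then 1 else 0 := by
    intro v
    unfold shiftVec
    by_cases hv : v = b0
    · subst hv
      by_cases hY : v ∈ Y <;> simp [hY]
    · by_cases hY : v ∈ Y <;> simp [hY, hv]
  rw [Finset.sum_congr rfl fun v _ => h v, Finset.sum_sub_distrib]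
  congr 1
  · simp
  · rw [Finset.sum_boole, Set.ncard_eq_toFinset_card']
    congr 2
    ext; simp

lemma sum_shift (b0 : V) : ∑ v, shiftVec b0 v = 0 := by
  have := sum_shift_set b0 Set.univ
  simpa [Set.ncard_univ] using this

lemma ncard_bounds {Y : Set V} (h1 : Y.Nonempty) (h2 : Y ≠ Set.univ) :
    0 < Y.ncard ∧ Y.ncard < Fintype.card V := by
  refine ⟨(Set.ncard_pos (Set.toFinite _)).2 h1, ?_⟩
  have := Set.ncard_lt_ncard (Set.ssubset_univ_iff.2 h2) (Set.toFinite _)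
  rwa [Set.ncard_univ, Nat.card_eq_fintype_card] at this

lemma gen_shift (b0 : V) (x : V → ℤ) :
    Gen ((Fintype.card V : ℤ) • x + shiftVec b0) := by
  intro Y h1 h2 h
  obtain ⟨h3, h4⟩ := ncard_bounds h1 h2
  have h5 : ∑ v, (if v ∈ Y then (1 : ℤ) else 0) *
      ((Fintype.card V : ℤ) • x + shiftVec b0) v =
      (Fintype.card V : ℤ) * (∑ v, (if v ∈ Y then (1 : ℤ) else 0) * x v) +
        ∑ v, (if v ∈ Y then (1 : ℤ) else 0) * shiftVec b0 v := by
    rw [Finset.mul_sum, ← Finset.sum_add_distrib]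
    refine Finset.sum_congr rfl fun v _ => ?_
    simp only [Pi.add_apply, Pi.smul_apply, smul_eq_mul]
    ring
  rw [h5, sum_shift_set] at h
  have h6 : (Fintype.card V : ℤ) ∣ (Y.ncard : ℤ) := by
    by_cases hb : b0 ∈ Y
    · rw [if_pos hb] at h
      exact ⟨(∑ v, (if v ∈ Y then (1 : ℤ) else 0) * x v) + 1, by linarith⟩
    · rw [if_neg hb] at h
      exact ⟨(∑ v, (if v ∈ Y then (1 : ℤ) else 0) * x v), by linarith⟩
  have := Nat.le_of_dvd h3 (by exact_mod_cast h6)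
  omega

lemma shift_flow {T : Set (V × V)} (hT : OTree T) (b0 : V) {F : V × V → ℤ}
    (hF : ∀ r, r ∉ T → F r = 0) (hd : dv F = shiftVec b0) {p : V × V} (hp : p ∈ T) :
    -(Fintype.card V : ℤ) < F p ∧ F p < Fintype.card V ∧
      (p ∈ tailEdges b0 T → F p < 0) ∧ (p ∉ tailEdges b0 T → 0 < F p) := by
  have h1 := hT.cut hp hF
  rw [hd] at h1
  have h2 := sum_shift_set b0 (side T p)
  have h3 : F p = (if b0 ∈ side T p then (Fintype.card V : ℤ) else 0) - (side T p).ncard := by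
    rw [h1, ← h2]
    rfl
  obtain ⟨h4, h5⟩ := ncard_bounds ⟨_, head_mem_side T p⟩
    (fun h => hT.tail_not_mem_side hp (h ▸ Set.mem_univ _))
  have h6 : p ∈ tailEdges b0 T ↔ b0 ∉ side T p := hT.isTailEdge_iff hp b0
  by_cases hb : b0 ∈ side T p
  · rw [if_pos hb] at h3
    refine ⟨by omega, by omega, fun h => absurd hb (h6.1 h), fun _ => by omega⟩
  · rw [if_neg hb] at h3
    refine ⟨by omega, by omega, fun _ => by omega, fun h => absurd (h6.2 hb) h⟩

lemma posOn_iff {T : Set (V × V)} (hT : OTree T) (b0 : V) {F c : V × V → ℤ}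
    (hF : ∀ r, r ∉ T → F r = 0) (hd : dv F = shiftVec b0) (hc : ∀ r, r ∉ T → c r = 0) :
    PosOn T ((Fintype.card V : ℤ) • c + F) ↔
      (∀ r, 0 ≤ c r) ∧ ∀ r ∈ tailEdges b0 T, 1 ≤ c r := by
  have hn : 0 < (Fintype.card V : ℤ) := by
    have : 0 < Fintype.card V := Fintype.card_pos_iff.2 ⟨b0⟩
    exact_mod_cast this
  constructor
  · rintro ⟨h1, -⟩
    constructor
    · intro r
      by_cases hr : r ∈ T
      · have h2 := h1 r hr
        obtain ⟨h3, h4, -, -⟩ := shift_flow hT b0 hF hd hr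
        simp only [Pi.add_apply, Pi.smul_apply, smul_eq_mul] at h2
        by_contra h
        nlinarith
      · rw [hc r hr]
    · intro r hrt
      have hr : r ∈ T := hrt.1
      have h2 := h1 r hr
      obtain ⟨-, -, h5, -⟩ := shift_flow hT b0 hF hd hr
      have := h5 hrt
      simp only [Pi.add_apply, Pi.smul_apply, smul_eq_mul] at h2
      by_contra h
      nlinarith
  · rintro ⟨h1, h2⟩
    constructor
    · intro r hr
      obtain ⟨h3, h4, h5, h6⟩ := shift_flow hT b0 hF hd hr
      simp only [Pi.add_apply, Pi.smul_apply, smul_eq_mul]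
      by_cases h : r ∈ tailEdges b0 T
      · have := h2 r h
        nlinarith
      · have := h6 h
        have := h1 r
        nlinarith
    · intro r hr
      simp [hF r hr, hc r hr]
end SEP

namespace SEP
variable {V : Type*} [Fintype V] [DecidableEq V]
set_option linter.unusedSectionVars false

/-! ### Lattice points of the dilated polytope -/

lemma poly_le {G : SimpleGraph V} {l : V → ℤ} (hl : IsLayering G l) {w : V → ℝ}
    (hw : w ∈ symEdgePolytope G) : ∑ v, (l v : ℝ) * w v ≤ 1 := by
  have hsub : symEdgePolytope G ⊆ {w : V → ℝ | ∑ v, (l v : ℝ) * w v ≤ 1} := by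
    refine convexHull_min ?_ ?_
    · rintro _ ⟨u, v, huv, rfl⟩
      have h1 := (abs_le.1 (hl.step huv)).2
      have h2 : (l u : ℝ) - l v ≤ 1 := by exact_mod_cast h1
      rw [Set.mem_ofPred_eq]
      simpa [stdVec, mul_sub, Finset.sum_sub_distrib] using h2
    · refine convex_halfSpace_le ⟨?_, ?_⟩ 1
      · intro x y
        simp [mul_add, Finset.sum_add_distrib]
      · intro a x
        simp only [Pi.smul_apply, smul_eq_mul, Finset.mul_sum]
        exact Finset.sum_congr rfl fun v _ => by ring
  exact hsub hw

lemma poly_sum {G : SimpleGraph V} {w : V → ℝ}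
    (hw : w ∈ symEdgePolytope G) : ∑ v, w v = 0 := by
  have hsub : symEdgePolytope G ⊆ {w : V → ℝ | ∑ v, w v = 0} := by
    refine convexHull_min ?_ ?_
    · rintro _ ⟨u, v, huv, rfl⟩
      rw [Set.mem_ofPred_eq]
      simp [stdVec, Finset.sum_sub_distrib]
    · refine convex_hyperplane ⟨?_, ?_⟩ 0
      · intro x y
        simp [Finset.sum_add_distrib]
      · intro a x
        simp only [Pi.smul_apply, smul_eq_mul, Finset.mul_sum]
  exact hsub hw

lemma zero_mem_poly {G : SimpleGraph V} {b0 b1 : V} (hb : G.Adj b0 b1) :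
    (0 : V → ℝ) ∈ symEdgePolytope G := by
  have h1 : stdVec b0 - stdVec b1 ∈ symEdgePolytope G :=
    subset_convexHull ℝ _ ⟨b0, b1, hb, rfl⟩
  have h2 : stdVec b1 - stdVec b0 ∈ symEdgePolytope G :=
    subset_convexHull ℝ _ ⟨b1, b0, hb.symm, rfl⟩
  have h3 := (convex_convexHull ℝ _) h1 h2 (a := 1 / 2) (b := 1 / 2)
    (by norm_num) (by norm_num) (by norm_num)
  have h4 : (1 / 2 : ℝ) • (stdVec b0 - stdVec b1) + (1 / 2 : ℝ) • (stdVec b1 - stdVec b0)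
      = (0 : V → ℝ) := by
    rw [← smul_add]
    simp
  rw [h4] at h3
  exact h3

lemma dv_coord (c : V × V → ℤ) (v : V) :
    (dv c v : ℝ) = ∑ p, (c p : ℝ) * (stdVec p.2 v - stdVec p.1 v) := by
  have h := dv_pair (fun w => if v = w then (1 : ℤ) else 0) c
  simp only [ite_mul, one_mul, zero_mul, Finset.sum_ite_eq, Finset.mem_univ, if_true] at h
  rw [h]
  push_cast
  rfl

lemma mem_dilate {G : SimpleGraph V} {b0 b1 : V} (hb : G.Adj b0 b1) {l : V → ℤ}
    (hl : IsLayering G l) {T : Set (V × V)} (hT : T ⊆ facetDigraph G l) {c : V × V → ℤ}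
    (hc : ∀ r, r ∉ T → c r = 0) (hc0 : ∀ r, 0 ≤ c r) (k : ℕ) :
    (fun v => (dv c v : ℝ)) ∈ (k : ℝ) • symEdgePolytope G ↔ ∑ r, c r ≤ k := by
  constructor
  · rintro ⟨w, hw, he⟩
    have h1 := poly_le hl hw
    have h2 := cost_eq hT hc
    have h3 : (∑ v, (l v : ℝ) * (dv c v : ℝ)) = ((∑ r, c r : ℤ) : ℝ) := by
      rw [← h2]; push_cast; rfl
    have h4 : (∑ v, (l v : ℝ) * (dv c v : ℝ)) = k * ∑ v, (l v : ℝ) * w v := by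
      rw [Finset.mul_sum]
      refine Finset.sum_congr rfl fun v _ => ?_
      have := congrFun he v
      simp only [Pi.smul_apply, smul_eq_mul] at this
      rw [← this]
      ring
    have h5 : ((∑ r, c r : ℤ) : ℝ) ≤ ((k : ℤ) : ℝ) := by
      rw [← h3, h4]
      push_cast
      exact mul_le_of_le_one_right (Nat.cast_nonneg k) h1
    exact_mod_cast h5
  · intro hs
    have h0 := zero_mem_poly hb
    rcases Nat.eq_zero_or_pos k with rfl | hk
    · have hz : c = 0 := by
        have h1 : ∑ r, c r = 0 := le_antisymm (by simpa using hs)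
          (Finset.sum_nonneg fun r _ => hc0 r)
        funext r
        exact (Finset.sum_eq_zero_iff_of_nonneg (fun r _ => hc0 r)).1 h1 r (Finset.mem_univ r)
      refine ⟨0, h0, ?_⟩
      funext v
      simp [hz, dv_zero]
    · have hkr : (0 : ℝ) < k := by exact_mod_cast hk
      have hsr : (∑ r, (c r : ℝ)) ≤ k := by exact_mod_cast hs
      have hmem := (convex_convexHull ℝ
        {x : V → ℝ | ∃ u v, G.Adj u v ∧ x = stdVec u - stdVec v}).sum_mem
        (t := (Finset.univ : Finset (Option (V × V))))
        (w := fun o => o.elim (1 - ∑ r, (c r : ℝ) / k) (fun r => (c r : ℝ) / k))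
        (z := fun o => o.elim 0 (fun r => if r ∈ T then stdVec r.2 - stdVec r.1 else 0))
        (by
          rintro (_ | r) _
          · simp only [Option.elim]
            rw [← Finset.sum_div, sub_nonneg, div_le_one hkr]
            exact hsr
          · simp only [Option.elim]
            exact div_nonneg (by exact_mod_cast hc0 r) hkr.le)
        (by rw [Fintype.sum_option]; simp)
        (by
          rintro (_ | r) _
          · exact h0
          · simp only [Option.elim]
            split_ifs with hr
            · exact subset_convexHull ℝ _ ⟨r.2, r.1, (hT hr).1.symm, rfl⟩
            · exact h0)
      refine ⟨_, hmem, ?_⟩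
      funext v
      rw [dv_coord, Fintype.sum_option]
      simp only [Option.elim, smul_zero, zero_add, Pi.smul_apply, Finset.sum_apply, smul_eq_mul]
      rw [Finset.mul_sum]
      refine Finset.sum_congr rfl fun r _ => ?_
      by_cases hr : r ∈ T
      · rw [if_pos hr, Pi.sub_apply]
        field_simp
      · simp [hc r hr]

lemma good_finite (T A : Set (V × V)) (k : ℕ) : Finite {c // Good T A k c} := by
  refine Set.Finite.to_subtype (s := {c | Good T A k c}) ?_
  refine (Set.finite_Icc (0 : V × V → ℤ) (fun _ => (k : ℤ))).subset ?_
  rintro c ⟨h1, h2, h3, h4⟩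
  exact ⟨fun r => h2 r, fun r =>
    (Finset.single_le_sum (fun r _ => h2 r) (Finset.mem_univ r)).trans h4⟩

lemma lattice_eq_card {G : SimpleGraph V} (hG : G.Connected)
    {ρ : V → V → V} (hrib : IsRibbon G ρ) {b0 b1 : V} (hb : G.Adj b0 b1) (k : ℕ)
    (J : Finset (Set (V × V) × Set (V × V)))
    (hJ : ∀ q, q ∈ J ↔ IsFacetGraph G q.1 ∧ IsJaegerTree ρ b0 b1 q.1 q.2) :
    Nat.card (Σ q : J, {c // Good q.1.2 (tailEdges b0 q.1.2) k c}) = latticeCount G k := by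
  have hot : ∀ q ∈ J, OTree q.2 := by
    intro q hq
    obtain ⟨⟨l, hl, hD⟩, hjt⟩ := (hJ q).1 hq
    exact otree_of_sub (hD ▸ hjt.1)
  refine Nat.card_eq_of_bijective (fun s => ⟨dv s.2.1, ?_⟩) ⟨?_, ?_⟩
  · obtain ⟨⟨q, hq⟩, c, hc1, hc2, hc3, hc4⟩ := s
    obtain ⟨⟨l, hl, hD⟩, hjt⟩ := (hJ q).1 hq
    exact (mem_dilate hb hl (hD ▸ hjt.1.1) hc1 hc2 k).2 hc4
  · rintro ⟨⟨⟨D, T⟩, hq⟩, c, hc1, hc2, hc3, hc4⟩ ⟨⟨⟨D', T'⟩, hq'⟩, c', hc1', hc2', hc3', hc4'⟩ he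
    have hdv : dv c = dv c' := congrArg Subtype.val he
    obtain ⟨hD, hjt⟩ := (hJ _).1 hq
    obtain ⟨hD', hjt'⟩ := (hJ _).1 hq'
    have oT := hot _ hq
    have oT' := hot _ hq'
    simp only at hD hjt hD' hjt' oT oT' hc1 hc3 hc1' hc3'
    obtain ⟨F, hF, hFd⟩ := exists_flow oT.tree.connected (shiftVec b0) (sum_shift b0)
    obtain ⟨F', hF', hFd'⟩ := exists_flow oT'.tree.connected (shiftVec b0) (sum_shift b0)
    obtain ⟨rfl, rfl⟩ := jaeger_unique hrib hb hD hD' hjt hjt'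
      ((posOn_iff oT b0 hF hFd hc1).2 ⟨hc2, hc3⟩)
      ((posOn_iff oT' b0 hF' hFd' hc1').2 ⟨hc2', hc3'⟩)
      (by rw [dv_add, dv_add, dv_smul, dv_smul, hFd, hFd', hdv])
    obtain rfl := oT.flow_unique hc1 hc1' hdv
    rfl
  · rintro ⟨x, hx⟩
    have hx0 : ∑ v, x v = 0 := by
      obtain ⟨w, hw, he⟩ := hx
      have h1 := poly_sum hw
      have h2 : ∑ v, (x v : ℝ) = 0 := by
        have : ∀ v, (x v : ℝ) = k * w v := fun v => (congrFun he v).symm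
        simp only [this, ← Finset.mul_sum, h1, mul_zero]
      exact_mod_cast h2
    obtain ⟨D, T, w, hD, hjt, hw, hwd⟩ := jaeger_exists hG hrib hb
      ((Fintype.card V : ℤ) • x + shiftVec b0) (by
        simp only [Pi.add_apply, Pi.smul_apply, smul_eq_mul, Finset.sum_add_distrib,
          ← Finset.mul_sum, hx0, sum_shift]
        simp) (gen_shift b0 x)
    have hq : (D, T) ∈ J := (hJ _).2 ⟨hD, hjt⟩
    have oT : OTree T := hot _ hq
    obtain ⟨F, hF, hFd⟩ := exists_flow oT.tree.connected (shiftVec b0) (sum_shift b0)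
    obtain ⟨c, hc1, hcd⟩ := exists_flow oT.tree.connected x hx0
    have hwc : w = (Fintype.card V : ℤ) • c + F := by
      refine oT.flow_unique hw.2 ?_ ?_
      · intro r hr
        simp [hF r hr, hc1 r hr]
      · rw [hwd, dv_add, dv_smul, hcd, hFd]
    rw [hwc] at hw
    obtain ⟨hc2, hc3⟩ := (posOn_iff oT b0 hF hFd hc1).1 hw
    obtain ⟨l, hl, hDl⟩ := hD
    have hc4 := (mem_dilate hb hl (hDl ▸ hjt.1.1) hc1 hc2 k).1 (by rw [hcd]; exact hx)
    exact ⟨⟨⟨(D, T), hq⟩, ⟨c, hc1, hc2, hc3, hc4⟩⟩, Subtype.ext hcd⟩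

end SEP

namespace SEP

/-- The `i`-th coefficient of the `h*`-polynomial of the symmetric edge polytope equals the
number `N i` of Jaeger trees of facet graphs of `G` with exactly `i` tail-edges:
for every `k ≥ 0`, the number of lattice points of the `k`-th dilate is
`∑_{i=0}^{|V|−1} N i · C(k + |V| − 1 − i, |V| − 1)`. -/
theorem hstar_counts_jaeger_trees_by_tail_edges
    {V : Type*} [Fintype V] [DecidableEq V]
    (G : SimpleGraph V) (hG : G.Connected)
    (ρ : V → V → V) (hrib : IsRibbon G ρ) (b0 b1 : V) (hb : G.Adj b0 b1)
    (N : ℕ → ℕ)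
    (hN : ∀ i : ℕ, N i = Nat.card {q : Set (V × V) × Set (V × V) //
      IsFacetGraph G q.1 ∧ IsJaegerTree ρ b0 b1 q.1 q.2 ∧ numTailEdges b0 q.2 = i}) :
    ∀ k : ℕ, latticeCount G k =
      ∑ i ∈ Finset.range (Fintype.card V),
        N i * Nat.choose (k + (Fintype.card V - 1) - i) (Fintype.card V - 1) := by
  intro k
  have hJfin : {q : Set (V × V) × Set (V × V) |
      IsFacetGraph G q.1 ∧ IsJaegerTree ρ b0 b1 q.1 q.2}.Finite := Set.toFinite _
  obtain ⟨J, hJ⟩ : ∃ J : Finset (Set (V × V) × Set (V × V)),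
      ∀ q, q ∈ J ↔ IsFacetGraph G q.1 ∧ IsJaegerTree ρ b0 b1 q.1 q.2 :=
    ⟨hJfin.toFinset, fun q => by rw [Set.Finite.mem_toFinset]; rfl⟩
  have hot : ∀ q ∈ J, OTree q.2 := by
    intro q hq
    obtain ⟨⟨l, hl, hD⟩, hjt⟩ := (hJ q).1 hq
    exact otree_of_sub (hD ▸ hjt.1)
  have htail : ∀ T : Set (V × V), numTailEdges b0 T = (tailEdges b0 T).ncard := fun T =>
    Nat.card_coe_set_eq _
  have hsubT : ∀ T : Set (V × V), tailEdges b0 T ⊆ T := fun T p hp => hp.1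
  have hfib : ∀ q ∈ J, Nat.card {c // Good q.2 (tailEdges b0 q.2) k c} =
      Nat.choose (k + (Fintype.card V - 1) - numTailEdges b0 q.2) (Fintype.card V - 1) := by
    intro q hq
    rw [card_good (hsubT q.2) k (hot q hq).ncard, htail]
  have hfinite : ∀ q : J, Finite {c // Good q.1.2 (tailEdges b0 q.1.2) k c} := fun q =>
    good_finite _ _ _
  have hpos : 0 < Fintype.card V := Fintype.card_pos_iff.2 ⟨b0⟩
  rw [← lattice_eq_card hG hrib hb k J hJ, Nat.card_sigma,
    Finset.sum_congr rfl (fun (q : J) _ => hfib q.1 q.2),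
    Finset.sum_coe_sort J (fun q => Nat.choose
      (k + (Fintype.card V - 1) - numTailEdges b0 q.2) (Fintype.card V - 1)),
    ← Finset.sum_fiberwise_of_maps_to (s := J) (t := Finset.range (Fintype.card V))
      (g := fun q => numTailEdges b0 q.2)]
  · refine Finset.sum_congr rfl fun i _ => ?_
    have hcard : N i = (J.filter fun q => numTailEdges b0 q.2 = i).card := by
      rw [hN, ← Nat.card_eq_finsetCard]
      refine Nat.card_congr (Equiv.subtypeEquivRight fun q => ?_)
      rw [Finset.mem_filter, hJ, and_assoc]
    rw [hcard, ← smul_eq_mul, ← Finset.sum_const]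
    refine Finset.sum_congr rfl fun q hq => ?_
    rw [(Finset.mem_filter.1 hq).2]
  · intro q hq
    rw [Finset.mem_range, htail]
    have h1 := Set.ncard_le_ncard (hsubT q.2) (Set.toFinite _)
    rw [(hot q hq).ncard] at h1
    omega

end SEP
end

section
/- Let 𝒢 be a finite connected simple bipartite graph. Then every layering l of 𝒢 satisfies |l(u) − l(v)| = 1 for every edge uv of 𝒢; in particular every edge of 𝒢 is present (non-hidden) in every facet graph of 𝒢, so the facet graphs of 𝒢 are orientations of the full edge set of 𝒢. -/
open scoped Classical Pointwise

namespace SEP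

/-- In a connected bipartite graph every layering has layer difference exactly one along
every edge; in particular every edge is present in every facet graph, i.e. the facet graphs
are orientations of the full edge set. -/
theorem bipartite_layerings_have_no_hidden_edges
    {V : Type*} [Fintype V] [DecidableEq V]
    (G : SimpleGraph V) (hG : G.Connected)
    (s : Set V) (hbip : IsBipartition G s) :
    (∀ l : V → ℤ, IsLayering G l → ∀ ⦃u v : V⦄, G.Adj u v → |l u - l v| = 1) ∧
    (∀ D : Set (V × V), IsFacetGraph G D → IsOrientation G D) := by
  have key : ∀ l : V → ℤ, IsLayering G l → ∀ ⦃u v : V⦄, G.Adj u v → |l u - l v| = 1 := by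
    intro l hl u v huv
    have par : ∀ a b : V,
        (SimpleGraph.fromRel fun u v => G.Adj u v ∧ |l u - l v| = 1).Walk a b →
        ((a ∈ s ↔ b ∈ s) ↔ (l a - l b) % 2 = 0) := by
      intro a b w
      induction w with
      | nil => simp
      | @cons x y z h p ih =>
        rw [SimpleGraph.fromRel_adj] at h
        have h1 : G.Adj x y ∧ |l x - l y| = 1 := by
          rcases h.2 with h | h
          · exact h
          · exact ⟨h.1.symm, by rw [abs_sub_comm]; exact h.2⟩
        have h2 := hbip h1.1
        have h3 : (l x - l z) % 2 = 0 ↔ ¬ (l y - l z) % 2 = 0 := by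
          rcases (abs_eq (by norm_num)).1 h1.2 with h | h <;> omega
        rw [h3, ← ih, h2]
        tauto
    obtain ⟨w⟩ := hl.conn.preconnected u v
    have h1 := par u v w
    have h2 := hbip huv
    have h3 : ¬ (l u - l v) % 2 = 0 := by
      rw [← h1, h2]
      tauto
    have h4 := abs_le.1 (hl.step huv)
    rw [abs_eq (by norm_num)]
    omega
  refine ⟨key, ?_⟩
  rintro D ⟨l, hl, rfl⟩
  refine ⟨fun p hp => hp.1, fun u v huv => ?_⟩
  have h := (abs_eq (by norm_num)).1 (key l hl huv)
  simp only [facetDigraph, Set.mem_setOf_eq, huv, huv.symm, true_and]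
  omega

end SEP
end

section
/- Let 𝒢 be a finite connected simple graph, b_0 ∈ V, f a weight function, and let G and G′ be facet graphs of 𝒢 with f(G) < f(G′). Then there exists a partition (V_0, V_1) of V into nonempty parts with b_0 ∈ V_0 such that every edge of 𝒢 between V_0 and V_1 that is present in G′ is directed from V_1 to V_0 in G′, and every edge of 𝒢 between V_0 and V_1 that is present in G is directed from V_0 to V_1 in G. -/
open scoped Classical Pointwise

namespace SEP

/-- If two facet graphs satisfy `f(G) < f(G′)`, then there is a partition `(V₀, V₁)` with
`b₀ ∈ V₀` such that every present edge of `G′` between the parts points from `V₁` to `V₀`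
and every present edge of `G` between the parts points from `V₀` to `V₁`. -/
theorem nonfirst_orientation_exits_directed_cut
    {V : Type*} [Fintype V] [DecidableEq V]
    (G : SimpleGraph V) (hG : G.Connected)
    (b0 : V) (f : V → ℝ) (hf : IsWeight b0 f)
    (l l' : V → ℤ) (hl : IsLayering G l) (hl' : IsLayering G l')
    (hlt : ∑ v, (l v : ℝ) * f v < ∑ v, (l' v : ℝ) * f v) :
    ∃ V0 : Set V, V0.Nonempty ∧ V0ᶜ.Nonempty ∧ b0 ∈ V0 ∧
      (∀ p ∈ facetDigraph G l', p.1 ∈ V0 → p.2 ∈ V0) ∧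
      (∀ p ∈ facetDigraph G l, p.2 ∈ V0 → p.1 ∈ V0) := by
  have hneg : ∃ v, l' v - l v < l' b0 - l b0 := by
    by_contra! hcon
    have htot : ∑ v, f v = 0 := by
      rw [← Finset.add_sum_erase _ _ (Finset.mem_univ b0), hf.base, hf.total]
      norm_num
    have hle : ∑ v, (((l' v - l v) - (l' b0 - l b0) : ℤ) : ℝ) * f v ≤ 0 := by
      apply Finset.sum_nonpos
      intro v _
      by_cases hv : v = b0
      · subst hv
        simp
      · apply mul_nonpos_of_nonneg_of_nonpos
        · exact_mod_cast sub_nonneg.mpr (hcon v)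
        · exact hf.ub v hv
    have heq : ∑ v, (((l' v - l v) - (l' b0 - l b0) : ℤ) : ℝ) * f v
        = ∑ v, (l' v : ℝ) * f v - ∑ v, (l v : ℝ) * f v
          - ((l' b0 : ℝ) - l b0) * ∑ v, f v := by
      rw [Finset.mul_sum, ← Finset.sum_sub_distrib, ← Finset.sum_sub_distrib]
      apply Finset.sum_congr rfl
      intro v _
      push_cast
      ring
    rw [heq, htot] at hle
    linarith
  obtain ⟨w, hw⟩ := hneg
  refine ⟨{v | l' b0 - l b0 ≤ l' v - l v}, ⟨b0, by simp⟩, ⟨w, not_le.mpr hw⟩,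
    by simp, ?_, ?_⟩
  · rintro ⟨u, v⟩ ⟨hadj, h1⟩ h2
    have h3 := abs_le.mp (hl.step hadj)
    simp only [Set.mem_setOf_eq] at *
    omega
  · rintro ⟨u, v⟩ ⟨hadj, h1⟩ h2
    have h3 := abs_le.mp (hl'.step hadj)
    simp only [Set.mem_setOf_eq] at *
    omega

end SEP
end

section
/- Let 𝒢 be a finite connected simple graph, b_0 ∈ V, and f a weight function. Then the function l(v) = −dist(b_0, v) is a layering of 𝒢, its facet graph G_1 admits no partition (V_0, V_1) of V into nonempty parts with b_0 ∈ V_0 in which every present edge of G_1 between the parts is directed from V_0 to V_1, and consequently f(G_1) > f(G) for every facet graph G ≠ G_1 of 𝒢. -/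
open scoped Classical Pointwise

namespace SEP

theorem exists_parent {V : Type*} (G : SimpleGraph V) (hG : G.Connected) (b0 v : V)
    (hv : v ≠ b0) : ∃ w, G.Adj v w ∧ G.dist b0 v = G.dist b0 w + 1 := by
  obtain ⟨p, hp⟩ := hG.exists_walk_length_eq_dist v b0
  cases p with
  | nil => exact absurd rfl hv
  | @cons _ w _ h q =>
    refine ⟨w, h, ?_⟩
    have h1 := SimpleGraph.dist_le q
    have h2 : G.dist v b0 ≤ G.dist v w + G.dist w b0 := hG.dist_triangle
    have h3 : G.dist v w = 1 := SimpleGraph.dist_eq_one_iff_adj.2 h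
    rw [SimpleGraph.Walk.length_cons] at hp
    rw [SimpleGraph.dist_comm (u := b0) (v := v), SimpleGraph.dist_comm (u := b0) (v := w)]
    omega

theorem dist_step {V : Type*} (G : SimpleGraph V) (hG : G.Connected) (b0 u v : V)
    (h : G.Adj u v) : G.dist b0 v ≤ G.dist b0 u + 1 := by
  have h2 : G.dist b0 v ≤ G.dist b0 u + G.dist u v := hG.dist_triangle
  rwa [SimpleGraph.dist_eq_one_iff_adj.2 h] at h2

theorem layer_walk {V : Type*} (G : SimpleGraph V) (l : V → ℤ)
    (hl : ∀ ⦃u v⦄, G.Adj u v → |l u - l v| ≤ 1) {u v : V} (p : G.Walk u v) :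
    l u - l v ≤ p.length := by
  induction p with
  | nil => simp
  | cons h q ih =>
    have := (abs_le.1 (hl h)).2
    rw [SimpleGraph.Walk.length_cons]
    push_cast
    linarith

/-- The function `l(v) = −dist(b₀, v)` is a layering; its facet graph admits no directed cut
pointing away from the side of `b₀`; and its `f`-value is strictly larger than that of every
other facet graph. -/
theorem first_facet_graph
    {V : Type*} [Fintype V] [DecidableEq V]
    (G : SimpleGraph V) (hG : G.Connected)
    (b0 : V) (f : V → ℝ) (hf : IsWeight b0 f) :
    IsLayering G (fun v => -(G.dist b0 v : ℤ)) ∧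
    (¬ ∃ V0 : Set V, V0.Nonempty ∧ V0ᶜ.Nonempty ∧ b0 ∈ V0 ∧
        ∀ p ∈ facetDigraph G (fun v => -(G.dist b0 v : ℤ)), p.2 ∈ V0 → p.1 ∈ V0) ∧
    (∀ l : V → ℤ, IsLayering G l →
      facetDigraph G l ≠ facetDigraph G (fun v => -(G.dist b0 v : ℤ)) →
      ∑ v, (l v : ℝ) * f v < ∑ v, ((-(G.dist b0 v : ℤ) : ℤ) : ℝ) * f v) := by
  have key : ∀ P : V → Prop, P b0 →
      (∀ v w, G.Adj v w → G.dist b0 v = G.dist b0 w + 1 → P w → P v) → ∀ v, P v := by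
    intro P h0 hs
    have : ∀ n v, G.dist b0 v = n → P v := by
      intro n
      induction n with
      | zero =>
        intro v hv
        rw [← hG.dist_eq_zero_iff.1 hv]
        exact h0
      | succ n ih =>
        intro v hv
        by_cases hvb : v = b0
        · rw [hvb]; exact h0
        · obtain ⟨w, hw, hd⟩ := exists_parent G hG b0 v hvb
          exact hs v w hw hd (ih w (by omega))
    exact fun v => this _ v rfl
  refine ⟨⟨?_, ?_⟩, ?_, ?_⟩
  · intro u v h
    have h1 := dist_step G hG b0 u v h
    have h2 := dist_step G hG b0 v u h.symm
    rw [abs_le]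
    constructor <;> omega
  · have hr : ∀ v, (SimpleGraph.fromRel fun u v => G.Adj u v ∧
        |(fun v => -(G.dist b0 v : ℤ)) u - (fun v => -(G.dist b0 v : ℤ)) v| = 1).Reachable
        b0 v := by
      apply key
      · exact SimpleGraph.Reachable.refl _
      · intro v w h hd hw
        refine hw.trans (SimpleGraph.Adj.reachable ?_)
        rw [SimpleGraph.fromRel_adj]
        refine ⟨h.ne.symm, Or.inl ⟨h.symm, ?_⟩⟩
        have : -(G.dist b0 w : ℤ) - -(G.dist b0 v : ℤ) = 1 := by omega
        simp only [this, abs_one]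
    haveI : Nonempty V := ⟨b0⟩
    exact SimpleGraph.Connected.mk fun u v => (hr u).symm.trans (hr v)
  · rintro ⟨V0, -, ⟨x, hx⟩, hb, hc⟩
    refine hx (key (fun v => v ∈ V0) hb ?_ x)
    intro v w h hd hw
    refine hc (v, w) ⟨h, ?_⟩ hw
    show -(G.dist b0 w : ℤ) - -(G.dist b0 v : ℤ) = 1
    omega
  · intro l hl hne
    have hlow : ∀ v, -(G.dist b0 v : ℤ) ≤ l v - l b0 := by
      intro v
      obtain ⟨p, hp⟩ := hG.exists_walk_length_eq_dist b0 v
      have := layer_walk G l hl.step p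
      rw [hp] at this
      linarith
    have hneg : ∀ v, v ≠ b0 → f v < 0 := fun v hv =>
      lt_of_le_of_ne (hf.ub v hv) (hf.indep.ne_zero ⟨v, hv⟩)
    have htot : ∑ v, f v = 0 := by
      rw [← Finset.add_sum_erase _ _ (Finset.mem_univ b0), hf.total, hf.base]
      norm_num
    have hsh : ∑ v, (l v : ℝ) * f v = ∑ v, ((l v - l b0 : ℤ) : ℝ) * f v := by
      push_cast
      simp only [sub_mul, Finset.sum_sub_distrib, ← Finset.mul_sum, htot]
      simp
    rw [hsh]
    have hle : ∀ v, ((l v - l b0 : ℤ) : ℝ) * f v ≤ ((-(G.dist b0 v : ℤ) : ℤ) : ℝ) * f v := by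
      intro v
      by_cases hv : v = b0
      · subst hv; simp
      · exact mul_le_mul_of_nonpos_right (by exact_mod_cast hlow v) (hneg v hv).le
    refine Finset.sum_lt_sum (fun v _ => hle v) ?_
    by_contra hcon
    push Not at hcon
    apply hne
    have heq : ∀ v, l v = l b0 - (G.dist b0 v : ℤ) := by
      intro v
      by_cases hv : v = b0
      · subst hv; simp
      · have h1 := le_antisymm (hle v) (hcon v (Finset.mem_univ v))
        have h2 := mul_right_cancel₀ (hneg v hv).ne h1
        have h3 : l v - l b0 = -(G.dist b0 v : ℤ) := by exact_mod_cast h2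
        linarith
    ext ⟨u, v⟩
    simp only [facetDigraph, Set.mem_setOf_eq, heq u, heq v]
    refine and_congr_right fun _ => ?_
    constructor <;> intro h <;> linarith

end SEP
end

section
/- Let 𝒢 be a finite connected simple graph and let G and G′ be facet graphs of 𝒢. Suppose an edge xy of 𝒢 is present in G directed from x to y, and is not present in G′. Then there exists a partition (V_0, V_1) of V with x ∈ V_0 and y ∈ V_1 such that every edge of 𝒢 between V_0 and V_1 is either not present in G or directed from V_0 to V_1 in G, and is either not present in G′ or directed from V_1 to V_0 in G′. -/
open scoped Classical Pointwise

namespace SEP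

/-- If an edge `xy` of `G` is present in a facet graph directed x→y and hidden in another
facet graph, then there is a partition `(V₀, V₁)` with `x ∈ V₀`, `y ∈ V₁` such that every
edge of `G` between the parts is, in the first facet graph, hidden or directed from `V₀` to
`V₁`, and, in the second one, hidden or directed from `V₁` to `V₀`. -/
theorem cut_from_present_and_hidden_edge
    {V : Type*} [Fintype V] [DecidableEq V]
    (G : SimpleGraph V) (hG : G.Connected)
    (l l' : V → ℤ) (hl : IsLayering G l) (hl' : IsLayering G l')
    (x y : V) (hxy : (x, y) ∈ facetDigraph G l)
    (h1 : (x, y) ∉ facetDigraph G l') (h2 : (y, x) ∉ facetDigraph G l') :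
    ∃ V0 : Set V, x ∈ V0 ∧ y ∉ V0 ∧
      (∀ p ∈ facetDigraph G l, p.2 ∈ V0 → p.1 ∈ V0) ∧
      (∀ p ∈ facetDigraph G l', p.1 ∈ V0 → p.2 ∈ V0) := by
  obtain ⟨hadj, hlxy⟩ := hxy
  simp only at hadj hlxy
  have a1 : ¬ (l' y - l' x = 1) := fun h => h1 ⟨hadj, h⟩
  have a2 : ¬ (l' x - l' y = 1) := fun h => h2 ⟨hadj.symm, h⟩
  have a3 := abs_le.mp (hl'.step hadj)
  refine ⟨{v | l v - l' v ≤ l x - l' x}, by simp, ?_, ?_, ?_⟩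
  · simp only [Set.mem_setOf_eq]
    omega
  · rintro ⟨u, v⟩ ⟨ha, hd⟩ hm
    have b := abs_le.mp (hl'.step ha)
    simp only [Set.mem_setOf_eq] at *
    omega
  · rintro ⟨u, v⟩ ⟨ha, hd⟩ hm
    have b := abs_le.mp (hl.step ha)
    simp only [Set.mem_setOf_eq] at *
    omega

end SEP
end

section
/- Let 𝒢 be a finite connected simple graph and let G and G′ be facet graphs of 𝒢. Suppose an edge xy of 𝒢 is present in G directed from x to y, and present in G′ directed from y to x. Then there exists a partition (V_0, V_1) of V with x ∈ V_0 and y ∈ V_1 such that every edge of 𝒢 between V_0 and V_1 is either not present in G or directed from V_0 to V_1 in G, and is either not present in G′ or directed from V_1 to V_0 in G′. -/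
open scoped Classical Pointwise

namespace SEP

/-- If an edge `xy` of `G` is directed x→y in one facet graph and y→x in another, then there
is a partition `(V₀, V₁)` with `x ∈ V₀`, `y ∈ V₁` such that every edge of `G` between the
parts is, in the first facet graph, hidden or directed from `V₀` to `V₁`, and, in the second
one, hidden or directed from `V₁` to `V₀`. -/
theorem cut_from_oppositely_oriented_edge
    {V : Type*} [Fintype V] [DecidableEq V]
    (G : SimpleGraph V) (hG : G.Connected)
    (l l' : V → ℤ) (hl : IsLayering G l) (hl' : IsLayering G l')
    (x y : V) (hxy : (x, y) ∈ facetDigraph G l) (hyx : (y, x) ∈ facetDigraph G l') :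
    ∃ V0 : Set V, x ∈ V0 ∧ y ∉ V0 ∧
      (∀ p ∈ facetDigraph G l, p.2 ∈ V0 → p.1 ∈ V0) ∧
      (∀ p ∈ facetDigraph G l', p.1 ∈ V0 → p.2 ∈ V0) := by
  obtain ⟨_, h1⟩ := hxy
  obtain ⟨_, h2⟩ := hyx
  dsimp only at h1 h2
  refine ⟨{v | l v - l' v ≤ l x - l' x}, ?_, ?_, ?_, ?_⟩
  · exact le_refl (l x - l' x)
  · intro h
    have h : l y - l' y ≤ l x - l' x := h
    omega
  · rintro ⟨u, v⟩ ⟨ha, hb⟩ h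
    have h : l v - l' v ≤ l x - l' x := h
    show l u - l' u ≤ l x - l' x
    have := abs_le.mp (hl'.step ha)
    dsimp only at hb this
    omega
  · rintro ⟨u, v⟩ ⟨ha, hb⟩ h
    have h : l u - l' u ≤ l x - l' x := h
    show l v - l' v ≤ l x - l' x
    have := abs_le.mp (hl.step ha)
    dsimp only at hb this
    omega

end SEP
end
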